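/- arXiv:2301.02155 — 5 statements merged into one kernel-verified Lean document; each statement's English description precedes it below -/
import Mathlib

section
/- For every p ∈ [0,1], the pair (ᾱ(p), β̄(p)) belongs to the achievable storage-retrieval rate region R of the (2,2) PIR problem, where ᾱ(p) = 9/4 − H(1/4, 3/4) + (1/4)·H((1−p)/2, (1−p)/2, p/2, p/2) + (1/2)·H((2−p)/4, (2−p)/4, p/2) − (3/4)·H((3−2p)/6, (3−2p)/6, p/3, p/3) and β̄(p) = 5/8 + (1/4)·H((2−p)/4, (2−p)/4, p/2) − (1/8)·H((1−p)/2, (1−p)/2, p). -/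
open scoped BigOperators

namespace PIR

/-- Messages are length-`L` vectors over `F_2`. -/
abbrev Msg (L : ℕ) := Fin L → ZMod 2

/-- A (2,2) PIR code (without the correctness condition) with message length `L`
and query alphabet `Q`.  The two messages are independent and uniform on `F_2^L`;
the queries are independent of the messages (built into the model: the query
distribution `P k` for desired message `k` does not depend on the messages). -/
structure CodeBase (L : ℕ) (Q : Type) [Fintype Q] [DecidableEq Q] where
  /-- query distribution for desired message index `k` -/
  P : Fin 2 → Q × Q → ℝ
  P_nonneg : ∀ k qq, 0 ≤ P k qq
  P_sum : ∀ k, ∑ qq : Q × Q, P k qq = 1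
  /-- number of stored `F_2` symbols at database `n` -/
  stor : Fin 2 → ℕ
  /-- storage encoders -/
  phi : (n : Fin 2) → Msg L × Msg L → (Fin (stor n) → ZMod 2)
  /-- answer lengths -/
  blen : Fin 2 → Q → ℕ
  /-- deterministic answer functions -/
  ans : (n : Fin 2) → (q : Q) → (Fin (stor n) → ZMod 2) → (Fin (blen n q) → ZMod 2)
  /-- decoding functions -/
  dec : (k : Fin 2) → (q₁ q₂ : Q) → (Fin (blen 0 q₁) → ZMod 2) →
      (Fin (blen 1 q₂) → ZMod 2) → Msg L
  /-- Privacy: for each database `n`, the joint distribution of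
  `(Q_n^{[k]}, A_n^{[k]}, S_n)` is the same for `k = 1, 2`.  Since the answer
  `A_n` is the fixed deterministic function `ans` of `(Q_n, S_n)` (not
  depending on `k`), this is expressed as equality of the joint distributions of
  `(Q_n, S_n)` (messages uniform, queries independent of messages). -/
  privacy : ∀ (n : Fin 2) (q : Q) (s : Fin (stor n) → ZMod 2),
    (∑ qq : Q × Q, if (if n = 0 then qq.1 else qq.2) = q then P 0 qq else 0) *
      ((Finset.univ.filter (fun w : Msg L × Msg L => phi n w = s)).card : ℝ) =
    (∑ qq : Q × Q, if (if n = 0 then qq.1 else qq.2) = q then P 1 qq else 0) *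
      ((Finset.univ.filter (fun w : Msg L × Msg L => phi n w = s)).card : ℝ)

variable {L : ℕ} {Q : Type} [Fintype Q] [DecidableEq Q]

/-- The desired message `W_k`. -/
def target (k : Fin 2) (w : Msg L × Msg L) : Msg L := if k = 0 then w.1 else w.2

/-- The decoder output `Ŵ_k` when the realized queries are `qq` and the messages `w`. -/
def retrieved (C : CodeBase L Q) (k : Fin 2) (qq : Q × Q) (w : Msg L × Msg L) : Msg L :=
  C.dec k qq.1 qq.2 (C.ans 0 qq.1 (C.phi 0 w)) (C.ans 1 qq.2 (C.phi 1 w))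

/-- Zero-error correctness: `Ŵ_k = W_k` for all realizations. -/
def IsZeroError (C : CodeBase L Q) : Prop :=
  ∀ (k : Fin 2) (w : Msg L × Msg L) (qq : Q × Q), C.P k qq ≠ 0 →
    retrieved C k qq w = target k w

/-- The average probability of error `P_e`. -/
noncomputable def Pe (C : CodeBase L Q) : ℝ :=
  (1/2) * ∑ k : Fin 2, ∑ w : Msg L × Msg L, ∑ qq : Q × Q,
    ((2:ℝ)^(2*L))⁻¹ * C.P k qq * (if retrieved C k qq w ≠ target k w then 1 else 0)

/-- The retrieval rate `β_n = E[β_n^{(Q_n)}]` (the marginal of `Q_n` is the same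
for `k=1,2` by privacy; we use `k=1`, i.e. index `0`). -/
noncomputable def betaRate (C : CodeBase L Q) (n : Fin 2) : ℝ :=
  ∑ qq : Q × Q, C.P 0 qq * (C.blen n (if n = 0 then qq.1 else qq.2) : ℝ)

/-- A linear PIR code: storage encoders and answer functions are `F_2`-linear. -/
def IsLinear (C : CodeBase L Q) : Prop :=
  (∀ n : Fin 2, IsLinearMap (ZMod 2) (C.phi n)) ∧
  (∀ (n : Fin 2) (q : Q), IsLinearMap (ZMod 2) (C.ans n q))

/-- A bundled PIR code (with its query alphabet). -/
structure Code (L : ℕ) where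
  Q : Type
  [fQ : Fintype Q]
  [dQ : DecidableEq Q]
  base : CodeBase L Q

attribute [instance] Code.fQ Code.dQ

/-- A normalized storage-retrieval pair `(ᾱ, β̄)` is achievable. -/
def Achievable (ab : ℝ × ℝ) : Prop :=
  ∀ ε > (0:ℝ), ∃ L₀ : ℕ, ∀ L ≥ L₀, ∃ C : Code L,
    IsZeroError C.base ∧
    ((C.base.stor 0 + C.base.stor 1 : ℕ) : ℝ) / 2 ≤ L * (ab.1 + ε) ∧
    (betaRate C.base 0 + betaRate C.base 1) / 2 ≤ L * (ab.2 + ε)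

/-- Achievability by linear codes. -/
def LinAchievable (ab : ℝ × ℝ) : Prop :=
  ∀ ε > (0:ℝ), ∃ L₀ : ℕ, ∀ L ≥ L₀, ∃ C : Code L,
    IsZeroError C.base ∧ IsLinear C.base ∧
    ((C.base.stor 0 + C.base.stor 1 : ℕ) : ℝ) / 2 ≤ L * (ab.1 + ε) ∧
    (betaRate C.base 0 + betaRate C.base 1) / 2 ≤ L * (ab.2 + ε)

/-- The achievable storage-retrieval rate region `R`. -/
def Region : Set (ℝ × ℝ) := { ab | Achievable ab }

/-- The query distribution used for the `(2,2)` PIR system: for message 1,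
uniform on `{(1,1),(2,2)}`; for message 2, uniform on `{(1,2),(2,1)}`. -/
noncomputable def stdP : Fin 2 → Fin 2 × Fin 2 → ℝ :=
  fun k qq => if (k = 0 ∧ qq.1 = qq.2) ∨ (k = 1 ∧ qq.1 ≠ qq.2) then 1/2 else 0


/-- The entropy function `H(p₁,…,p_t) = Σᵢ −pᵢ·log₂ pᵢ` of a probability vector
(with the convention `0·log₂ 0 = 0`, which holds since `Real.logb 2 0 = 0`). -/
noncomputable def hent (l : List ℝ) : ℝ := (l.map fun x => -(x * Real.logb 2 x)).sum

/-- The storage rate `ᾱ(p)` of Corollary 2. -/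
noncomputable def alphaCurve (p : ℝ) : ℝ :=
  9/4 - hent [1/4, 3/4] + (1/4) * hent [(1-p)/2, (1-p)/2, p/2, p/2]
    + (1/2) * hent [(2-p)/4, (2-p)/4, p/2]
    - (3/4) * hent [(3-2*p)/6, (3-2*p)/6, p/3, p/3]

/-- The retrieval rate `β̄(p)` of Corollary 2. -/
noncomputable def betaCurve (p : ℝ) : ℝ :=
  5/8 + (1/4) * hent [(2-p)/4, (2-p)/4, p/2] - (1/8) * hent [(1-p)/2, (1-p)/2, p]

section codes

lemma enc {W T : Type} [Fintype T] (f : W → T) (d : ℕ) (h : Fintype.card T ≤ 2 ^ d) :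
    ∃ φ : W → (Fin d → ZMod 2), ∀ w w', φ w = φ w' ↔ f w = f w' := by
  have : Nonempty (T ↪ (Fin d → ZMod 2)) := by
    apply Function.Embedding.nonempty_of_card_le
    simpa [ZMod.card] using h
  obtain ⟨e⟩ := this
  exact ⟨fun w => e (f w), fun w w' => e.injective.eq_iff⟩

lemma mkCode {L : ℕ} (stor : Fin 2 → ℕ) (phi : (n : Fin 2) → Msg L × Msg L → (Fin (stor n) → ZMod 2))
    (blen : Fin 2 → Fin 2 → ℕ)
    (g : (n : Fin 2) → (q : Fin 2) → Msg L × Msg L → (Fin (blen n q) → ZMod 2))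
    (hg : ∀ n q w w', phi n w = phi n w' → g n q w = g n q w')
    (hd : ∀ k q₁ q₂, ((k = 0 ∧ q₁ = q₂) ∨ (k = 1 ∧ q₁ ≠ q₂)) → ∀ w w',
      g 0 q₁ w = g 0 q₁ w' → g 1 q₂ w = g 1 q₂ w' → target k w = target k w') :
    ∃ C : Code L, IsZeroError C.base ∧ C.base.stor = stor ∧
      ∀ n, betaRate C.base n = (blen n 0 + blen n 1 : ℝ) / 2 := by
  classical
  have hans : ∀ n q, ∃ a : (Fin (stor n) → ZMod 2) → (Fin (blen n q) → ZMod 2),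
      ∀ w, a (phi n w) = g n q w := by
    intro n q
    refine ⟨fun s => if h : ∃ w, phi n w = s then g n q h.choose else 0, fun w => ?_⟩
    have h : ∃ w', phi n w' = phi n w := ⟨w, rfl⟩
    simp only [h, dite_true]
    exact hg n q _ _ h.choose_spec
  choose ans hans using hans
  have hdec : ∀ k q₁ q₂, ∃ D : (Fin (blen 0 q₁) → ZMod 2) → (Fin (blen 1 q₂) → ZMod 2) → Msg L,
      ((k = 0 ∧ q₁ = q₂) ∨ (k = 1 ∧ q₁ ≠ q₂)) → ∀ w, D (g 0 q₁ w) (g 1 q₂ w) = target k w := by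
    intro k q₁ q₂
    refine ⟨fun x y => if h : ∃ w, g 0 q₁ w = x ∧ g 1 q₂ w = y then target k h.choose else 0,
      fun hk w => ?_⟩
    have h : ∃ w', g 0 q₁ w' = g 0 q₁ w ∧ g 1 q₂ w' = g 1 q₂ w := ⟨w, rfl, rfl⟩
    simp only [h, dite_true]
    exact hd k q₁ q₂ hk _ _ h.choose_spec.1 h.choose_spec.2
  choose dec hdec using hdec
  let C : CodeBase L (Fin 2) :=
    { P := stdP
      P_nonneg := by intro k qq; unfold stdP; split_ifs <;> norm_num
      P_sum := by
        intro k
        rw [Fintype.sum_prod_type]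
        fin_cases k <;> simp [Fin.sum_univ_two, stdP] <;> norm_num
      stor := stor
      phi := phi
      blen := blen
      ans := ans
      dec := dec
      privacy := by
        intro n q s
        congr 1
        rw [Fintype.sum_prod_type, Fintype.sum_prod_type]
        fin_cases n <;> fin_cases q <;> simp [Fin.sum_univ_two, stdP] }
  refine ⟨⟨Fin 2, C⟩, ?_, rfl, ?_⟩
  · intro k w qq hP
    change dec k qq.1 qq.2 (ans 0 qq.1 (phi 0 w)) (ans 1 qq.2 (phi 1 w)) = target k w
    rw [hans, hans]
    apply hdec
    by_contra hcon
    apply hP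
    change stdP k qq = 0
    unfold stdP
    rw [if_neg hcon]
  · intro n
    change ∑ qq : Fin 2 × Fin 2, stdP 0 qq * (blen n (if n = 0 then qq.1 else qq.2) : ℝ) = _
    rw [Fintype.sum_prod_type]
    fin_cases n <;> simp [Fin.sum_univ_two, stdP] <;> ring

end codes

section combin

open Finset

/-- Random covering: if every `w` is handled by at least `G` parameters, then `M` parameters
suffice to handle all `w`. -/
lemma cover_lemma {W Θ : Type} [Fintype W] [Fintype Θ] [DecidableEq W] [DecidableEq Θ]
    (R : W → Θ → Prop) [∀ w, DecidablePred (R w)] (G M : ℕ)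
    (hG : ∀ w, G ≤ #{θ | R w θ})
    (hM : Fintype.card W * (Fintype.card Θ - G) ^ M < Fintype.card Θ ^ M) :
    ∃ f : Fin M → Θ, ∀ w, ∃ i, R w (f i) := by
  by_contra hcon
  push Not at hcon
  have h1 : (univ : Finset (Fin M → Θ)) ⊆
      univ.biUnion (fun w : W => Fintype.piFinset (fun _ : Fin M => ({θ | ¬ R w θ} : Finset Θ))) := by
    intro f _
    obtain ⟨w, hw⟩ := hcon f
    simp only [mem_biUnion, mem_univ, true_and, Fintype.mem_piFinset, mem_filter]
    exact ⟨w, hw⟩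
  have h2 := card_le_card h1
  have h3 : Fintype.card Θ ^ M ≤ Fintype.card W * (Fintype.card Θ - G) ^ M := by
    calc Fintype.card Θ ^ M = #(univ : Finset (Fin M → Θ)) := by simp
      _ ≤ _ := h2
      _ ≤ #(univ : Finset W) * (Fintype.card Θ - G) ^ M := by
        apply card_biUnion_le_card_mul
        intro w _
        rw [Fintype.card_piFinset]
        simp only [prod_const, card_univ, Fintype.card_fin]
        apply Nat.pow_le_pow_left
        have e1 := card_filter_add_card_filter_not (s := (univ : Finset Θ)) (R w)
        have e2 : G ≤ #(univ.filter (R w)) := by convert hG w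
        rw [card_univ] at e1
        omega
      _ = _ := by simp
  omega

/-- Two-point collision count for uniformly random functions. -/
lemma hash_pair {α : Type} [Fintype α] [DecidableEq α] (B : ℕ) (y y' : α) (h : y' ≠ y) :
    #{f : α → Fin B | f y' = f y} * B ≤ Fintype.card (α → Fin B) := by
  have : #(({f : α → Fin B | f y' = f y} : Finset (α → Fin B)) ×ˢ (univ : Finset (Fin B)))
      ≤ #(univ : Finset (α → Fin B)) := by
    apply card_le_card_of_injOn (fun x => Function.update x.1 y' x.2)
    · intro x _; simp
    · rintro ⟨f, c⟩ hf ⟨g, d⟩ hg hfg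
      simp only [coe_product, Set.mem_prod, coe_filter, Set.mem_ofPred_eq, mem_univ, true_and] at hf hg
      simp only at hfg
      have hc : c = d := by simpa using congrFun hfg y'
      have hrest : ∀ z, z ≠ y' → f z = g z := by
        intro z hz
        simpa [Function.update_of_ne hz] using congrFun hfg z
      have : f = g := by
        funext z
        by_cases hz : z = y'
        · rw [hz, hf.1, hg.1]; exact hrest y h.symm
        · exact hrest z hz
      rw [hc, this]
  simpa [card_product] using this

/-- Most random functions do not collide at `y` with a small set. -/
lemma hash_set {α : Type} [Fintype α] [DecidableEq α] (B : ℕ) (y : α) (T : Finset α) :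
    #{f : α → Fin B | ∃ y' ∈ T, y' ≠ y ∧ f y' = f y} * B ≤ #T * Fintype.card (α → Fin B) := by
  have h1 : ({f : α → Fin B | ∃ y' ∈ T, y' ≠ y ∧ f y' = f y} : Finset (α → Fin B)) ⊆
      (T.filter (· ≠ y)).biUnion (fun y' => {f : α → Fin B | f y' = f y}) := by
    intro f hf
    simp only [mem_filter, mem_univ, true_and, mem_biUnion] at *
    obtain ⟨y', a, b, c⟩ := hf
    exact ⟨y', ⟨a, b⟩, c⟩
  calc _ ≤ #((T.filter (· ≠ y)).biUnion (fun y' => {f : α → Fin B | f y' = f y})) * B :=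
        Nat.mul_le_mul_right _ (card_le_card h1)
    _ ≤ (∑ y' ∈ T.filter (· ≠ y), #{f : α → Fin B | f y' = f y}) * B :=
        Nat.mul_le_mul_right _ card_biUnion_le
    _ = ∑ y' ∈ T.filter (· ≠ y), #{f : α → Fin B | f y' = f y} * B := by rw [sum_mul]
    _ ≤ ∑ y' ∈ T.filter (· ≠ y), Fintype.card (α → Fin B) := by
        apply sum_le_sum
        intro y' hy'
        exact hash_pair B y y' (mem_filter.1 hy').2
    _ = #(T.filter (· ≠ y)) * Fintype.card (α → Fin B) := by simp
    _ ≤ _ := Nat.mul_le_mul_right _ (card_le_card (filter_subset _ _))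

/-- Type class of a pair of subsets. -/
def Typed {n : ℕ} (m k : ℕ) (u : Finset (Fin n) × Finset (Fin n)) : Prop :=
  #(u.1 ∩ u.2) = m ∧ #(u.1 ∪ u.2)ᶜ = m ∧ #(u.1 \ u.2) = k ∧ #(u.2 \ u.1) = k

/-- The set of types pairs is large. -/
lemma typed_count (n m k : ℕ) (hn : n = 2 * m + 2 * k) [DecidablePred (Typed (n := n) m k)] :
    n.choose m * (m + 2 * k).choose m * (2 * k).choose k ≤
      #{u : Finset (Fin n) × Finset (Fin n) | Typed m k u} := by
  let S : Finset (Σ _ : (Σ _ : Finset (Fin n), Finset (Fin n)), Finset (Fin n)) :=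
    ((powersetCard m (univ : Finset (Fin n))).sigma (fun X => powersetCard m Xᶜ)).sigma
      (fun XZ => powersetCard k (XZ.1 ∪ XZ.2)ᶜ)
  have hS : #S = n.choose m * (m + 2 * k).choose m * (2 * k).choose k := by
    have hc : ∀ x ∈ (powersetCard m (univ : Finset (Fin n))).sigma (fun X => powersetCard m Xᶜ),
        #(powersetCard k (x.1 ∪ x.2)ᶜ) = (2 * k).choose k := by
      rintro ⟨X, Z⟩ hx
      simp only [mem_sigma, mem_powersetCard, subset_univ, true_and] at hx
      obtain ⟨h1, h2, h3⟩ := hx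
      rw [card_powersetCard, card_compl, card_union_of_disjoint, h1, h3, Fintype.card_fin]
      · congr 1; omega
      · exact (disjoint_compl_right (a := X)).mono_right h2
    have hc2 : ∀ x ∈ (powersetCard m (univ : Finset (Fin n))),
        #(powersetCard m xᶜ) = (m + 2 * k).choose m := by
      intro X hx
      simp only [mem_powersetCard, subset_univ, true_and] at hx
      rw [card_powersetCard, card_compl, hx, Fintype.card_fin]
      congr 1; omega
    rw [card_sigma, sum_congr rfl hc, sum_const, card_sigma, sum_congr rfl hc2, sum_const,
      card_powersetCard]
    simp
  rw [← hS]
  apply card_le_card_of_injOn (fun x => (x.1.1 ∪ x.2, x.1.2ᶜ \ x.2))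
  · rintro ⟨⟨X, Z⟩, Y⟩ hx
    simp only [S, coe_sigma, Set.mem_sigma_iff, mem_coe, mem_powersetCard, subset_univ, true_and] at hx
    obtain ⟨⟨h1, h2, h3⟩, h4, h5⟩ := hx
    have hXZ : ∀ i, i ∈ Z → i ∉ X := fun i hi => by simpa using h2 hi
    have hY : ∀ i, i ∈ Y → i ∉ X ∧ i ∉ Z := fun i hi => by simpa using h4 hi
    rw [mem_coe, mem_filter]
    refine ⟨mem_univ _, ?_⟩
    unfold Typed
    dsimp only
    have e1 : (X ∪ Y) ∩ (Zᶜ \ Y) = X := by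
      ext i; have := hXZ i; have := hY i; simp; tauto
    have e2 : ((X ∪ Y) ∪ (Zᶜ \ Y))ᶜ = Z := by
      ext i; have := hXZ i; have := hY i; simp; tauto
    have e3 : (X ∪ Y) \ (Zᶜ \ Y) = Y := by
      ext i; have := hXZ i; have := hY i; simp; tauto
    have e4 : (Zᶜ \ Y) \ (X ∪ Y) = ((X ∪ Z) ∪ Y)ᶜ := by
      ext i; have := hXZ i; have := hY i; simp; tauto
    rw [e1, e2, e3, e4]
    refine ⟨h1, h3, h5, ?_⟩
    rw [card_compl, card_union_of_disjoint, card_union_of_disjoint, Fintype.card_fin]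
    · omega
    · rw [disjoint_left]; intro i hi hi'; exact hXZ i hi' hi
    · rw [disjoint_left]; intro i hi hi'
      have := hY i hi'
      simp at hi; tauto
  · rintro ⟨⟨X, Z⟩, Y⟩ hx ⟨⟨X', Z'⟩, Y'⟩ hx' he
    simp only [S, coe_sigma, Set.mem_sigma_iff, mem_coe, mem_powersetCard, subset_univ, true_and] at hx hx'
    obtain ⟨⟨h1, h2, h3⟩, h4, h5⟩ := hx
    obtain ⟨⟨h1', h2', h3'⟩, h4', h5'⟩ := hx'
    have hXZ : ∀ i, i ∈ Z → i ∉ X := fun i hi => by simpa using h2 hi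
    have hY : ∀ i, i ∈ Y → i ∉ X ∧ i ∉ Z := fun i hi => by simpa using h4 hi
    have hXZ' : ∀ i, i ∈ Z' → i ∉ X' := fun i hi => by simpa using h2' hi
    have hY' : ∀ i, i ∈ Y' → i ∉ X' ∧ i ∉ Z' := fun i hi => by simpa using h4' hi
    simp only [Prod.mk.injEq] at he
    have ha : ∀ i, (i ∈ X ∨ i ∈ Y) ↔ (i ∈ X' ∨ i ∈ Y') := fun i => by
      simpa using (Finset.ext_iff.1 he.1) i
    have hb : ∀ i, (i ∉ Z ∧ i ∉ Y) ↔ (i ∉ Z' ∧ i ∉ Y') := fun i => by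
      simpa using (Finset.ext_iff.1 he.2) i
    have eX : X = X' := by
      ext i; grind only [hXZ i, hY i, hXZ' i, hY' i, ha i, hb i]
    have eY : Y = Y' := by
      ext i; grind only [hXZ i, hY i, hXZ' i, hY' i, ha i, hb i]
    have eZ : Z = Z' := by
      ext i; grind only [hXZ i, hY i, hXZ' i, hY' i, ha i, hb i]
    subst eX eY eZ
    rfl

end combin

section core

open Finset

/-- The hash isolates the two difference sets. -/
def GoodHash {n : ℕ} (B k : ℕ) (u : Finset (Fin n) × Finset (Fin n))
    (h : Finset (Fin n) → Fin B) : Prop :=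
  ∀ y ∈ powersetCard k (u.1 ∩ u.2)ᶜ ∪ powersetCard k (u.1 ∪ u.2),
    (y ≠ u.1 \ u.2 → h y ≠ h (u.1 \ u.2)) ∧ (y ≠ u.2 \ u.1 → h y ≠ h (u.2 \ u.1))

/-- Shift of a pair of sets. -/
def sh {n : ℕ} (v s : Finset (Fin n) × Finset (Fin n)) : Finset (Fin n) × Finset (Fin n) :=
  (symmDiff v.1 s.1, symmDiff v.2 s.2)

lemma sh_sh {n : ℕ} (v s : Finset (Fin n) × Finset (Fin n)) : sh v (sh v s) = s := by
  simp [sh]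

open Classical in
lemma goodhash_count (n m k : ℕ) (hn : n = 2 * m + 2 * k)
    (u : Finset (Fin n) × Finset (Fin n)) (hu : Typed m k u) :
    Fintype.card (Finset (Fin n) → Fin (8 * (m + 2 * k).choose k)) ≤
      2 * #{h : Finset (Fin n) → Fin (8 * (m + 2 * k).choose k) | GoodHash _ k u h} := by
  set K := (m + 2 * k).choose k with hK
  have hKpos : 0 < K := Nat.choose_pos (by omega)
  set T := powersetCard k (u.1 ∩ u.2)ᶜ ∪ powersetCard k (u.1 ∪ u.2) with hT
  have hTc : #T ≤ 2 * K := by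
    obtain ⟨h1, h2, h3, h4⟩ := hu
    refine (card_union_le _ _).trans ?_
    have hz : #(u.1 ∪ u.2) = m + 2 * k := by
      rw [card_compl, Fintype.card_fin] at h2
      have := card_le_univ (u.1 ∪ u.2)
      rw [Fintype.card_fin] at this
      omega
    rw [card_powersetCard, card_powersetCard, card_compl, h1, hz, Fintype.card_fin,
      show n - m = m + 2 * k by omega]
    omega
  have b1 := hash_set (8 * K) (u.1 \ u.2) T
  have b2 := hash_set (8 * K) (u.2 \ u.1) T
  set H := Fintype.card (Finset (Fin n) → Fin (8 * K)) with hH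
  set c1 := #{f : Finset (Fin n) → Fin (8 * K) | ∃ y' ∈ T, y' ≠ u.1 \ u.2 ∧ f y' = f (u.1 \ u.2)}
    with hc1
  set c2 := #{f : Finset (Fin n) → Fin (8 * K) | ∃ y' ∈ T, y' ≠ u.2 \ u.1 ∧ f y' = f (u.2 \ u.1)}
    with hc2
  have d1 : c1 * 4 ≤ H := by
    have : (c1 * 4) * (2 * K) ≤ H * (2 * K) := by nlinarith
    exact Nat.le_of_mul_le_mul_right this (by omega)
  have d2 : c2 * 4 ≤ H := by
    have : (c2 * 4) * (2 * K) ≤ H * (2 * K) := by nlinarith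
    exact Nat.le_of_mul_le_mul_right this (by omega)
  have hsub : (univ : Finset (Finset (Fin n) → Fin (8 * K))) ⊆
      (univ.filter (fun h : Finset (Fin n) → Fin (8 * K) => GoodHash _ k u h) ∪
        univ.filter (fun f : Finset (Fin n) → Fin (8 * K) =>
          ∃ y' ∈ T, y' ≠ u.1 \ u.2 ∧ f y' = f (u.1 \ u.2))) ∪
        univ.filter (fun f : Finset (Fin n) → Fin (8 * K) =>
          ∃ y' ∈ T, y' ≠ u.2 \ u.1 ∧ f y' = f (u.2 \ u.1)) := by
    intro f _
    by_contra hcon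
    simp only [mem_union, mem_filter, mem_univ, true_and, not_or, not_exists, not_and] at hcon
    apply hcon.1.1
    intro y hy
    exact ⟨fun h => hcon.1.2 y hy h, fun h => hcon.2 y hy h⟩
  have h5 := card_le_card hsub
  have h6 := card_union_le (({h | GoodHash _ k u h} : Finset (Finset (Fin n) → Fin (8 * K))) ∪
        ({f | ∃ y' ∈ T, y' ≠ u.1 \ u.2 ∧ f y' = f (u.1 \ u.2)} : Finset (Finset (Fin n) → Fin (8 * K))))
        ({f | ∃ y' ∈ T, y' ≠ u.2 \ u.1 ∧ f y' = f (u.2 \ u.1)} : Finset (Finset (Fin n) → Fin (8 * K)))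
  have h7 := card_union_le ({h | GoodHash _ k u h} : Finset (Finset (Fin n) → Fin (8 * K)))
        ({f | ∃ y' ∈ T, y' ≠ u.1 \ u.2 ∧ f y' = f (u.1 \ u.2)} : Finset (Finset (Fin n) → Fin (8 * K)))
  rw [card_univ, ← hH] at h5
  have h8 : H ≤ #{h : Finset (Fin n) → Fin (8 * K) | GoodHash _ k u h} + c1 + c2 := by
    refine h5.trans (h6.trans ?_)
    exact Nat.add_le_add_right h7 _
  omega

/-- A parameter (shift, hash) is good for `v`. -/
def Good {n : ℕ} (B m k : ℕ) (v : Finset (Fin n) × Finset (Fin n))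
    (θ : (Finset (Fin n) × Finset (Fin n)) × (Finset (Fin n) → Fin B)) : Prop :=
  Typed m k (sh v θ.1) ∧ GoodHash B k (sh v θ.1) θ.2

open Classical in
lemma good_count (n m k : ℕ) (hn : n = 2 * m + 2 * k)
    (v : Finset (Fin n) × Finset (Fin n)) :
    n.choose m * (m + 2 * k).choose m * (2 * k).choose k *
      Fintype.card (Finset (Fin n) → Fin (8 * (m + 2 * k).choose k)) ≤
      2 * #{θ | Good (8 * (m + 2 * k).choose k) m k v θ} := by
  set B := 8 * (m + 2 * k).choose k with hB
  let S : Finset (Σ _ : Finset (Fin n) × Finset (Fin n), (Finset (Fin n) → Fin B)) :=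
    ({u : Finset (Fin n) × Finset (Fin n) | Typed m k u} : Finset _).sigma
      (fun u => {h | GoodHash B k u h})
  have h1 : #S ≤ #{θ | Good B m k v θ} := by
    apply card_le_card_of_injOn (fun x => (sh v x.1, x.2))
    · rintro ⟨u, h⟩ hx
      simp only [S, coe_sigma, Set.mem_sigma_iff, mem_coe, mem_filter, mem_univ, true_and] at hx
      rw [mem_coe, mem_filter]
      refine ⟨mem_univ _, ?_⟩
      unfold Good
      dsimp only
      rw [sh_sh]
      exact hx
    · rintro ⟨u, h⟩ _ ⟨u', h'⟩ _ he
      simp only [Prod.mk.injEq] at he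
      have : u = u' := by rw [← sh_sh v u, he.1, sh_sh]
      rw [this, he.2]
  have h2 : #{u : Finset (Fin n) × Finset (Fin n) | Typed m k u} *
      Fintype.card (Finset (Fin n) → Fin B) ≤ 2 * #S := by
    rw [card_sigma, mul_sum, ← smul_eq_mul, ← sum_const]
    apply sum_le_sum
    intro u hu
    exact goodhash_count n m k hn u (mem_filter.1 hu).2
  calc _ ≤ _ := Nat.mul_le_mul_right _ (typed_count n m k hn)
    _ ≤ _ := h2
    _ ≤ _ := by omega

lemma exists_M (n N : ℕ) (hN : 0 < N) (hN4 : N ≤ 4 ^ n) (Hc : ℕ) (hH : 0 < Hc) (G : ℕ)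
    (hG : N * Hc ≤ 2 * G) :
    ∃ M : ℕ, (M : ℝ) * N ≤ (4 * n + 1) * 4 ^ n ∧
      4 ^ n * (4 ^ n * Hc - G) ^ M < (4 ^ n * Hc) ^ M := by
  have hNr : (0 : ℝ) < N := by exact_mod_cast hN
  have hN4r : (N : ℝ) ≤ 4 ^ n := by exact_mod_cast hN4
  have hHr : (0 : ℝ) < Hc := by exact_mod_cast hH
  have hGr : (N : ℝ) * Hc ≤ 2 * G := by exact_mod_cast hG
  have h4 : (0 : ℝ) < 4 ^ n := by positivity
  set δ : ℝ := N / (2 * 4 ^ n) with hδ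
  have hδpos : 0 < δ := by positivity
  have hδ1 : δ ≤ 1 / 2 := by
    rw [hδ, div_le_iff₀ (by positivity)]; linarith
  have hδN : δ * (2 * 4 ^ n) = N := by rw [hδ]; field_simp
  refine ⟨⌊2 * n / δ⌋₊ + 1, ?_, ?_⟩
  · have hfl : (⌊2 * n / δ⌋₊ : ℝ) ≤ 2 * n / δ := Nat.floor_le (by positivity)
    have hmul : (2 * n / δ) * N = 4 * n * 4 ^ n := by
      rw [← hδN]; field_simp; ring
    push_cast
    nlinarith
  · set M := ⌊2 * n / δ⌋₊ + 1 with hM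
    have hMlt : 2 * n < δ * M := by
      have := Nat.lt_floor_add_one (2 * n / δ)
      rw [div_lt_iff₀ hδpos] at this
      rw [hM]; push_cast; linarith
    have hsub : ((4 ^ n * Hc - G : ℕ) : ℝ) ≤ 4 ^ n * Hc * (1 - δ) := by
      rcases le_total G (4 ^ n * Hc) with h | h
      · rw [Nat.cast_sub h]; push_cast
        nlinarith
      · rw [Nat.sub_eq_zero_of_le h]
        have : 0 ≤ 1 - δ := by linarith
        push_cast; positivity
    have hexp : (1 - δ) ^ M ≤ Real.exp (-(δ * M)) := by
      have h1 : 1 - δ ≤ Real.exp (-δ) := Real.one_sub_le_exp_neg δ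
      calc (1 - δ) ^ M ≤ (Real.exp (-δ)) ^ M := pow_le_pow_left₀ (by linarith) h1 _
        _ = _ := by rw [← Real.exp_nat_mul]; congr 1; ring
    have h4e : (4 : ℝ) ^ n ≤ Real.exp (2 * n) := by
      have h2 : (4 : ℝ) ≤ Real.exp 2 := by
        have := Real.exp_one_gt_d9
        have e2 : Real.exp 2 = Real.exp 1 * Real.exp 1 := by rw [← Real.exp_add]; norm_num
        rw [e2]; nlinarith
      calc (4 : ℝ) ^ n ≤ (Real.exp 2) ^ n := pow_le_pow_left₀ (by norm_num) h2 _
        _ = _ := by rw [← Real.exp_nat_mul]; congr 1; ring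
    have hlt : (4 : ℝ) ^ n * (1 - δ) ^ M < 1 := by
      calc (4 : ℝ) ^ n * (1 - δ) ^ M ≤ Real.exp (2 * n) * Real.exp (-(δ * M)) := by
            apply mul_le_mul h4e hexp _ (Real.exp_nonneg _)
            apply pow_nonneg; linarith
        _ = Real.exp (2 * n - δ * M) := by rw [← Real.exp_add]; congr 1
        _ < 1 := by rw [Real.exp_lt_one_iff]; linarith
    have hfin : ((4 ^ n * (4 ^ n * Hc - G) ^ M : ℕ) : ℝ) < ((4 ^ n * Hc) ^ M : ℕ) := by
      push_cast [-Nat.cast_sub]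
      have hP : (0 : ℝ) < (4 ^ n * Hc) ^ M := by positivity
      calc (4 : ℝ) ^ n * ((4 ^ n * Hc - G : ℕ) : ℝ) ^ M
          ≤ 4 ^ n * (4 ^ n * Hc * (1 - δ)) ^ M := by
            apply mul_le_mul_of_nonneg_left _ h4.le
            exact pow_le_pow_left₀ (Nat.cast_nonneg _) hsub _
        _ = (4 ^ n * (1 - δ) ^ M) * (4 ^ n * Hc) ^ M := by rw [mul_pow _ (1 - δ)]; ring
        _ < 1 * (4 ^ n * Hc) ^ M := mul_lt_mul_of_pos_right hlt hP
        _ = _ := one_mul _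
    exact_mod_cast hfin

lemma core (n m k : ℕ) (hn : n = 2 * m + 2 * k) :
    ∃ (M : ℕ) (I : Finset (Fin n) × Finset (Fin n) → Fin M)
      (X Z : Finset (Fin n) × Finset (Fin n) → Finset (Fin n))
      (h1 h2 : Finset (Fin n) × Finset (Fin n) → Fin (8 * (m + 2 * k).choose k)),
      (M : ℝ) * (n.choose m * (m + 2 * k).choose m * (2 * k).choose k : ℕ) ≤ (4 * n + 1) * 4 ^ n ∧
      (∀ v, #(X v) = m) ∧ (∀ v, #(Z v) = m) ∧ (∀ v, Z v ⊆ (X v)ᶜ) ∧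
      (∀ v v', I v = I v' → X v = X v' → h1 v = h1 v' → v.1 = v'.1) ∧
      (∀ v v', I v = I v' → Z v = Z v' → h2 v = h2 v' → v.1 = v'.1) ∧
      (∀ v v', I v = I v' → X v = X v' → h2 v = h2 v' → v.2 = v'.2) ∧
      (∀ v v', I v = I v' → Z v = Z v' → h1 v = h1 v' → v.2 = v'.2) := by
  classical
  set B := 8 * (m + 2 * k).choose k with hB
  have hBpos : 0 < B := by have : 0 < (m + 2 * k).choose k := Nat.choose_pos (by omega); omega
  set N := n.choose m * (m + 2 * k).choose m * (2 * k).choose k with hNdef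
  have hNpos : 0 < N := by
    have a1 : 0 < n.choose m := Nat.choose_pos (by omega)
    have a2 : 0 < (m + 2 * k).choose m := Nat.choose_pos (by omega)
    have a3 : 0 < (2 * k).choose k := Nat.choose_pos (by omega)
    positivity
  have hcV : Fintype.card (Finset (Fin n) × Finset (Fin n)) = 4 ^ n := by
    simp [Fintype.card_prod, ← mul_pow]
  have hN4 : N ≤ 4 ^ n := by
    refine (typed_count n m k hn).trans ?_
    rw [← hcV]
    exact card_le_univ _
  have : Nonempty (Fin B) := ⟨⟨0, hBpos⟩⟩
  set Hc := Fintype.card (Finset (Fin n) → Fin B) with hHc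
  have hHpos : 0 < Hc := Fintype.card_pos
  obtain ⟨M, hM1, hM2⟩ := exists_M n N hNpos hN4 Hc hHpos ((N * Hc + 1) / 2) (by omega)
  obtain ⟨f, hf⟩ := cover_lemma (Good (n := n) B m k) ((N * Hc + 1) / 2) M
    (fun v => by have := good_count n m k hn v; rw [← hB, ← hHc, ← hNdef] at this; omega)
    (by rw [Fintype.card_prod (_ × _), hcV]; exact hM2)
  choose I hI using hf
  let U : Finset (Fin n) × Finset (Fin n) → Finset (Fin n) × Finset (Fin n) :=
    fun v => sh v (f (I v)).1
  have hU1 : ∀ v v', I v = I v' → (U v).1 = (U v').1 → v.1 = v'.1 := by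
    intro v v' h h'
    simp only [U, sh, h] at h'
    exact symmDiff_left_injective _ h'
  have hU2 : ∀ v v', I v = I v' → (U v).2 = (U v').2 → v.2 = v'.2 := by
    intro v v' h h'
    simp only [U, sh, h] at h'
    exact symmDiff_left_injective _ h'
  have hT : ∀ v, Typed m k (U v) := fun v => (hI v).1
  have hGH : ∀ v, GoodHash B k (U v) (f (I v)).2 := fun v => (hI v).2
  have key1 : ∀ v v', I v = I v' →
      ((U v).1 ∩ (U v).2 = (U v').1 ∩ (U v').2 ∨ ((U v).1 ∪ (U v).2)ᶜ = ((U v').1 ∪ (U v').2)ᶜ) →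
      (f (I v)).2 ((U v).1 \ (U v).2) = (f (I v')).2 ((U v').1 \ (U v').2) →
      (U v).1 \ (U v).2 = (U v').1 \ (U v').2 := by
    intro v v' h hor hh
    by_contra hne
    refine (hGH v' ((U v).1 \ (U v).2) ?_).1 hne ?_
    · rw [mem_union, mem_powersetCard, mem_powersetCard]
      refine hor.imp (fun e => ⟨?_, (hT v).2.2.1⟩) (fun e => ⟨?_, (hT v).2.2.1⟩)
      · rw [← e]; intro i; simp; tauto
      · rw [← compl_inj_iff.1 e]; intro i; simp; tauto
    · rw [← hh, h]
  have key2 : ∀ v v', I v = I v' →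
      ((U v).1 ∩ (U v).2 = (U v').1 ∩ (U v').2 ∨ ((U v).1 ∪ (U v).2)ᶜ = ((U v').1 ∪ (U v').2)ᶜ) →
      (f (I v)).2 ((U v).2 \ (U v).1) = (f (I v')).2 ((U v').2 \ (U v').1) →
      (U v).2 \ (U v).1 = (U v').2 \ (U v').1 := by
    intro v v' h hor hh
    by_contra hne
    refine (hGH v' ((U v).2 \ (U v).1) ?_).2 hne ?_
    · rw [mem_union, mem_powersetCard, mem_powersetCard]
      refine hor.imp (fun e => ⟨?_, (hT v).2.2.2⟩) (fun e => ⟨?_, (hT v).2.2.2⟩)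
      · rw [← e]; intro i; simp; tauto
      · rw [← compl_inj_iff.1 e]; intro i; simp; tauto
    · rw [← hh, h]
  have r1 : ∀ a b : Finset (Fin n), a = (a ∩ b) ∪ (a \ b) := by
    intro a b; ext i; simp; tauto
  have r2 : ∀ a b : Finset (Fin n), a = (a ∪ b)ᶜᶜ \ (b \ a) := by
    intro a b; ext i; simp; tauto
  have r3 : ∀ a b : Finset (Fin n), b = (a ∩ b) ∪ (b \ a) := by
    intro a b; ext i; simp; tauto
  have r4 : ∀ a b : Finset (Fin n), b = (a ∪ b)ᶜᶜ \ (a \ b) := by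
    intro a b; ext i; simp; tauto
  refine ⟨M, I, fun v => (U v).1 ∩ (U v).2, fun v => ((U v).1 ∪ (U v).2)ᶜ,
    fun v => (f (I v)).2 ((U v).1 \ (U v).2), fun v => (f (I v)).2 ((U v).2 \ (U v).1),
    hM1, fun v => (hT v).1, fun v => (hT v).2.1, ?_, ?_, ?_, ?_, ?_⟩
  · intro v i; simp; tauto
  · intro v v' h hx hh
    apply hU1 v v' h
    rw [r1 (U v).1 (U v).2, r1 (U v').1 (U v').2, key1 v v' h (Or.inl hx) hh]
    rw [show (U v).1 ∩ (U v).2 = _ from hx]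
  · intro v v' h hx hh
    apply hU1 v v' h
    rw [r2 (U v).1 (U v).2, r2 (U v').1 (U v').2, key2 v v' h (Or.inr hx) hh]
    rw [show ((U v).1 ∪ (U v).2)ᶜ = _ from hx]
  · intro v v' h hx hh
    apply hU2 v v' h
    rw [r3 (U v).1 (U v).2, r3 (U v').1 (U v').2, key2 v v' h (Or.inl hx) hh]
    rw [show (U v).1 ∩ (U v).2 = _ from hx]
  · intro v v' h hx hh
    apply hU2 v v' h
    rw [r4 (U v).1 (U v).2, r4 (U v').1 (U v').2, key1 v v' h (Or.inr hx) hh]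
    rw [show ((U v).1 ∪ (U v).2)ᶜ = _ from hx]

end core

section percode

open Finset

lemma code_exists (L n m k : ℕ) (hn : n = 2 * m + 2 * k) (hL : n ≤ L) :
    ∃ M : ℕ, 0 < M ∧
      (M : ℝ) * (n.choose m * (m + 2 * k).choose m * (2 * k).choose k : ℕ) ≤ (4 * n + 1) * 4 ^ n ∧
      ∃ C : Code L, IsZeroError C.base ∧
        C.base.stor 0 = Nat.clog 2 (M * (4 ^ (L - n) * (n.choose m * (m + 2 * k).choose m))) ∧
        C.base.stor 1 = Nat.clog 2 ((8 * (m + 2 * k).choose k) * (8 * (m + 2 * k).choose k)) ∧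
        betaRate C.base 0 = Nat.clog 2 (M * (4 ^ (L - n) * n.choose m)) ∧
        betaRate C.base 1 = Nat.clog 2 (8 * (m + 2 * k).choose k) := by
  classical
  have hcore := core n m k hn
  obtain ⟨B, hB⟩ : ∃ B, B = 8 * (m + 2 * k).choose k := ⟨_, rfl⟩
  rw [← hB] at hcore
  rw [← hB]
  obtain ⟨M, I, X, Z, h1, h2, hM, hX, hZ, hXZ, q1, q2, q3, q4⟩ := hcore
  have hMpos : 0 < M := Fin.pos (I (∅, ∅))
  set e := L - n with he
  have hcard : Fintype.card (Msg L) = Fintype.card (Finset (Fin n) × Fin (2 ^ e)) := by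
    simp [ZMod.card]
    rw [← pow_add]; congr 1; omega
  let E : Msg L ≃ Finset (Fin n) × Fin (2 ^ e) := Fintype.equivOfCardEq hcard
  let V : Msg L × Msg L → Finset (Fin n) × Finset (Fin n) := fun w => ((E w.1).1, (E w.2).1)
  let A : Msg L × Msg L → Fin (2 ^ e) × Fin (2 ^ e) := fun w => ((E w.1).2, (E w.2).2)
  have hE1 : ∀ w w' : Msg L × Msg L, (V w).1 = (V w').1 → A w = A w' → w.1 = w'.1 := by
    intro w w' a b
    apply E.injective
    exact Prod.ext a (Prod.mk.inj b).1
  have hE2 : ∀ w w' : Msg L × Msg L, (V w).2 = (V w').2 → A w = A w' → w.2 = w'.2 := by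
    intro w w' a b
    apply E.injective
    exact Prod.ext a (Prod.mk.inj b).2
  let S : Finset (Σ _ : Finset (Fin n), Finset (Fin n)) :=
    (powersetCard m (univ : Finset (Fin n))).sigma (fun X => powersetCard m Xᶜ)
  have hS : #S = n.choose m * (m + 2 * k).choose m := by
    have hc2 : ∀ x ∈ (powersetCard m (univ : Finset (Fin n))),
        #(powersetCard m xᶜ) = (m + 2 * k).choose m := by
      intro X hx
      simp only [mem_powersetCard, subset_univ, true_and] at hx
      rw [card_powersetCard, card_compl, hx, Fintype.card_fin]
      congr 1; omega
    rw [card_sigma, sum_congr rfl hc2, sum_const, card_powersetCard]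
    simp
  have hSm : ∀ v, (⟨X v, Z v⟩ : Σ _ : Finset (Fin n), Finset (Fin n)) ∈ S := by
    intro v
    simp only [S, mem_sigma, mem_powersetCard, subset_univ, true_and]
    exact ⟨hX v, hXZ v, hZ v⟩
  have h4 : 2 ^ e * 2 ^ e = 4 ^ e := by rw [← mul_pow]; norm_num
  -- storage encoders
  obtain ⟨p0, hp0⟩ := enc (fun w => (I (V w), A w, (⟨⟨X (V w), Z (V w)⟩, hSm (V w)⟩ : S)))
    (Nat.clog 2 (M * (4 ^ e * (n.choose m * (m + 2 * k).choose m))))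
    (by
      refine le_trans (le_of_eq ?_) (Nat.le_pow_clog (by norm_num) _)
      simp only [Fintype.card_prod, Fintype.card_fin, Fintype.card_coe, hS, h4])
  obtain ⟨p1, hp1⟩ := enc (fun w => (h1 (V w), h2 (V w))) (Nat.clog 2 (B * B))
    (by
      refine le_trans (le_of_eq ?_) (Nat.le_pow_clog (by norm_num) _)
      simp only [Fintype.card_prod, Fintype.card_fin])
  have c0 : Fintype.card (Fin M × (Fin (2 ^ e) × Fin (2 ^ e)) × (powersetCard m (univ : Finset (Fin n)))) ≤
      2 ^ Nat.clog 2 (M * (4 ^ e * n.choose m)) := by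
    refine le_trans (le_of_eq ?_) (Nat.le_pow_clog (by norm_num) _)
    simp only [Fintype.card_prod, Fintype.card_fin, Fintype.card_coe, card_powersetCard, h4,
      card_univ]
  have c1 : Fintype.card (Fin B) ≤ 2 ^ Nat.clog 2 B := by
    refine le_trans (le_of_eq ?_) (Nat.le_pow_clog (by norm_num) _)
    simp
  have hXm : ∀ v, X v ∈ powersetCard m (univ : Finset (Fin n)) := fun v => by
    simp [mem_powersetCard, hX v]
  have hZm : ∀ v, Z v ∈ powersetCard m (univ : Finset (Fin n)) := fun v => by
    simp [mem_powersetCard, hZ v]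
  obtain ⟨g00, hg00⟩ := enc (fun w => (I (V w), A w, (⟨X (V w), hXm (V w)⟩ :
    powersetCard m (univ : Finset (Fin n))))) _ c0
  obtain ⟨g01, hg01⟩ := enc (fun w => (I (V w), A w, (⟨Z (V w), hZm (V w)⟩ :
    powersetCard m (univ : Finset (Fin n))))) _ c0
  obtain ⟨g10, hg10⟩ := enc (fun w => h1 (V w)) _ c1
  obtain ⟨g11, hg11⟩ := enc (fun w => h2 (V w)) _ c1
  simp only [Prod.mk.injEq, Subtype.mk.injEq, Sigma.mk.injEq, heq_eq_eq] at hp0 hp1 hg00 hg01 hg10 hg11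
  let stor : Fin 2 → ℕ := fun i =>
    if i = 0 then Nat.clog 2 (M * (4 ^ e * (n.choose m * (m + 2 * k).choose m))) else Nat.clog 2 (B * B)
  let blen : Fin 2 → Fin 2 → ℕ := fun i _ =>
    if i = 0 then Nat.clog 2 (M * (4 ^ e * n.choose m)) else Nat.clog 2 B
  have hphi : ∀ i : Fin 2, ∃ φ : Msg L × Msg L → (Fin (stor i) → ZMod 2), ∀ w w',
      φ w = φ w' ↔ ((i = 0 → I (V w) = I (V w') ∧ A w = A w' ∧ X (V w) = X (V w') ∧ Z (V w) = Z (V w')) ∧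
        (i = 1 → h1 (V w) = h1 (V w') ∧ h2 (V w) = h2 (V w'))) := by
    rw [Fin.forall_fin_two]
    exact ⟨⟨p0, fun w w' => by simp [hp0]⟩, ⟨p1, fun w w' => by simp [hp1]⟩⟩
  have hgg : ∀ i q : Fin 2, ∃ φ : Msg L × Msg L → (Fin (blen i q) → ZMod 2), ∀ w w',
      φ w = φ w' ↔ ((i = 0 → I (V w) = I (V w') ∧ A w = A w' ∧ (q = 0 → X (V w) = X (V w')) ∧
          (q = 1 → Z (V w) = Z (V w'))) ∧
        (i = 1 → (q = 0 → h1 (V w) = h1 (V w')) ∧ (q = 1 → h2 (V w) = h2 (V w')))) := by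
    simp only [Fin.forall_fin_two]
    exact ⟨⟨⟨g00, fun w w' => by simp [hg00]⟩, ⟨g01, fun w w' => by simp [hg01]⟩⟩,
      ⟨g10, fun w w' => by simp [hg10]⟩, ⟨g11, fun w w' => by simp [hg11]⟩⟩
  choose phi hphi using hphi
  choose g hg using hgg
  obtain ⟨C, hC0, hCs, hCb⟩ := mkCode stor phi blen g
    (by
      intro i q w w' h
      rw [hphi] at h
      rw [hg]
      tauto)
    (by
      intro j a b hjab w w' ha hb
      rw [hg] at ha hb
      replace ha := ha.1 rfl
      replace hb := hb.2 rfl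
      obtain ⟨hI, hA, hax, haz⟩ := ha
      unfold target
      rcases hjab with ⟨rfl, rfl⟩ | ⟨rfl, hab⟩
      · simp only [if_true]
        apply hE1 _ _ _ hA
        rcases Fin.exists_fin_two.1 ⟨a, rfl⟩ with h | h
        · exact q1 _ _ hI (hax h) (hb.1 h)
        · exact q2 _ _ hI (haz h) (hb.2 h)
      · simp only [one_ne_zero, if_false]
        apply hE2 _ _ _ hA
        rcases Fin.exists_fin_two.1 ⟨a, rfl⟩ with h | h
        · exact q3 _ _ hI (hax h) (hb.2 (by omega))
        · exact q4 _ _ hI (haz h) (hb.1 (by omega)))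
  refine ⟨M, hMpos, hM, C, hC0, ?_, ?_, ?_, ?_⟩
  · rw [hCs]; simp [stor]
  · rw [hCs]; simp [stor]
  · rw [hCb]; simp [blen]
  · rw [hCb]; simp [blen]

end percode

section rates

lemma clog_le (x : ℕ) : (Nat.clog 2 x : ℝ) ≤ Real.logb 2 x + 1 := by
  rw [← Real.natCeil_logb_natCast]
  refine (Nat.ceil_lt_add_one ?_).le
  rcases Nat.eq_zero_or_pos x with rfl | h
  · simp
  · exact Real.logb_nonneg (by norm_num) (by exact_mod_cast h)

lemma code_rate (L m k : ℕ) (hL : 2 * m + 2 * k ≤ L) :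
    ∃ C : Code L, IsZeroError C.base ∧
      ((C.base.stor 0 + C.base.stor 1 : ℕ) : ℝ) / 2 ≤
        (Real.logb 2 (4 * L + 1) + 2 * L - Real.logb 2 ((2 * k).choose k : ℕ)
          + 2 * Real.logb 2 ((m + 2 * k).choose k : ℕ) + 8) / 2 ∧
      (betaRate C.base 0 + betaRate C.base 1) / 2 ≤
        (Real.logb 2 (4 * L + 1) + 2 * L - Real.logb 2 ((m + k).choose k : ℕ) + 5) / 2 := by
  obtain ⟨n, hn⟩ : ∃ n, n = 2 * m + 2 * k := ⟨_, rfl⟩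
  rw [← hn] at hL
  obtain ⟨M, hMpos, hM, C, hC, s0, s1, b0, b1⟩ := code_exists L n m k hn hL
  have k1 : 0 < n.choose m := Nat.choose_pos (by omega)
  have k2 : 0 < (m + 2 * k).choose m := Nat.choose_pos (by omega)
  have k3 : 0 < (2 * k).choose k := Nat.choose_pos (by omega)
  have k4 : 0 < (m + 2 * k).choose k := Nat.choose_pos (by omega)
  have k5 : 0 < (m + k).choose k := Nat.choose_pos (by omega)
  have hid : (m + 2 * k).choose m * (2 * k).choose k = (m + 2 * k).choose k * (m + k).choose k := by
    have := Nat.choose_mul (n := m + 2 * k) (k := 2 * k) (s := k) (by omega)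
    rw [show m + 2 * k - k = m + k by omega, show 2 * k - k = k by omega] at this
    rw [← this, ← Nat.choose_symm_of_eq_add (n := m + 2 * k) (a := m) (b := 2 * k) rfl]
  set c1 := n.choose m
  set c2 := (m + 2 * k).choose m
  set c3 := (2 * k).choose k
  set c4 := (m + 2 * k).choose k
  set c5 := (m + k).choose k
  have r0 : (0 : ℝ) < M := by exact_mod_cast hMpos
  have r1 : (0 : ℝ) < c1 := by exact_mod_cast k1
  have r2 : (0 : ℝ) < c2 := by exact_mod_cast k2
  have r3 : (0 : ℝ) < c3 := by exact_mod_cast k3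
  have r4 : (0 : ℝ) < c4 := by exact_mod_cast k4
  have r5 : (0 : ℝ) < c5 := by exact_mod_cast k5
  have hlog4 : Real.logb 2 4 = 2 := by
    rw [show (4 : ℝ) = 2 ^ (2 : ℕ) by norm_num, Real.logb_pow]; simp
  have hlog8 : Real.logb 2 8 = 3 := by
    rw [show (8 : ℝ) = 2 ^ (3 : ℕ) by norm_num, Real.logb_pow]; simp
  have hmain : Real.logb 2 M + Real.logb 2 c1 + Real.logb 2 c2 + Real.logb 2 c3 ≤
      Real.logb 2 (4 * L + 1) + 2 * n := by
    have h1 : (M : ℝ) * (c1 * c2 * c3) ≤ (4 * L + 1) * 4 ^ n := by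
      push_cast at hM
      refine hM.trans ?_
      have : (n : ℝ) ≤ L := by exact_mod_cast hL
      gcongr
    have h2 := Real.logb_le_logb_of_le (b := 2) (by norm_num) (by positivity) h1
    rw [Real.logb_mul (by positivity) (by positivity), Real.logb_mul (by positivity) (by positivity),
      Real.logb_mul (by positivity) (by positivity), Real.logb_mul (by positivity) (by positivity),
      Real.logb_pow, hlog4] at h2
    linarith
  have hid' : Real.logb 2 c2 + Real.logb 2 c3 = Real.logb 2 c4 + Real.logb 2 c5 := by
    rw [← Real.logb_mul (by positivity) (by positivity), ← Real.logb_mul (by positivity) (by positivity)]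
    congr 1
    exact_mod_cast hid
  have hsub : ((L - n : ℕ) : ℝ) = L - n := Nat.cast_sub hL
  have e1 := clog_le (M * (4 ^ (L - n) * (c1 * c2)))
  have e2 := clog_le ((8 * c4) * (8 * c4))
  have e3 := clog_le (M * (4 ^ (L - n) * c1))
  have e4 := clog_le (8 * c4)
  push_cast [-Nat.cast_sub] at e1 e2 e3 e4
  rw [Real.logb_mul (by positivity) (by positivity), Real.logb_mul (by positivity) (by positivity),
      Real.logb_mul (by positivity) (by positivity), Real.logb_pow, hlog4, hsub] at e1
  rw [Real.logb_mul (by positivity) (by positivity), Real.logb_mul (by positivity) (by positivity),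
      hlog8] at e2
  rw [Real.logb_mul (by positivity) (by positivity), Real.logb_mul (by positivity) (by positivity),
      Real.logb_pow, hlog4, hsub] at e3
  rw [Real.logb_mul (by positivity) (by positivity), hlog8] at e4
  refine ⟨C, hC, ?_, ?_⟩
  · rw [s0, s1]; push_cast; linarith
  · rw [b0, b1]; linarith

end rates

section asymp

open Filter Topology

lemma log_succ_sub (n : ℕ) (hn : 0 < n) :
    (n : ℝ) * (Real.log (n + 1) - Real.log n) ≤ 1 ∧
      1 ≤ ((n : ℝ) + 1) * (Real.log (n + 1) - Real.log n) := by
  have h : (0 : ℝ) < n := by exact_mod_cast hn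
  constructor
  · have := Real.log_le_sub_one_of_pos (x := ((n : ℝ) + 1) / n) (by positivity)
    rw [Real.log_div (by positivity) (by positivity)] at this
    have h2 : ((n : ℝ) + 1) / n - 1 = 1 / n := by field_simp; ring
    rw [h2, le_div_iff₀ h] at this
    linarith
  · have := Real.log_le_sub_one_of_pos (x := (n : ℝ) / (n + 1)) (by positivity)
    rw [Real.log_div (by positivity) (by positivity)] at this
    have h2 : (n : ℝ) / (n + 1) - 1 = - (1 / (n + 1)) := by field_simp; ring
    rw [h2] at this
    have h3 : 1 / ((n : ℝ) + 1) ≤ Real.log (n + 1) - Real.log n := by linarith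
    rw [div_le_iff₀ (by positivity)] at h3
    linarith

lemma log_fact_lower (n : ℕ) : (n : ℝ) * Real.log n - n ≤ Real.log (n.factorial : ℝ) := by
  induction n with
  | zero => simp
  | succ n ih =>
    rw [Nat.factorial_succ]
    push_cast
    rw [Real.log_mul (by positivity) (by positivity)]
    rcases Nat.eq_zero_or_pos n with rfl | h
    · simp
    · have := (log_succ_sub n h).1
      linarith

lemma log_fact_upper (n : ℕ) (hn : 1 ≤ n) :
    Real.log (n.factorial : ℝ) ≤ (n : ℝ) * Real.log n - n + Real.log n + 1 := by
  induction n, hn using Nat.le_induction with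
  | base => simp
  | succ n hn ih =>
    rw [Nat.factorial_succ]
    push_cast
    rw [Real.log_mul (by positivity) (by positivity)]
    have := (log_succ_sub n hn).2
    linarith

lemma tendsto_log_succ : Tendsto (fun L : ℕ => (Real.log (L + 1) + 1) / (L : ℝ)) atTop (𝓝 0) := by
  have h1 : Tendsto (fun x : ℝ => Real.log x / x) atTop (𝓝 0) := by
    simpa using Real.isLittleO_log_id_atTop.tendsto_div_nhds_zero
  have h2 : Tendsto (fun L : ℕ => Real.log L / (L : ℝ)) atTop (𝓝 0) :=
    h1.comp tendsto_natCast_atTop_atTop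
  have h3 : Tendsto (fun L : ℕ => (Real.log 2 + 1) / (L : ℝ)) atTop (𝓝 0) :=
    tendsto_const_div_atTop_nhds_zero_nat _
  have h4 := h2.add h3
  rw [add_zero] at h4
  refine tendsto_of_tendsto_of_tendsto_of_le_of_le' tendsto_const_nhds h4 ?_ ?_
  · filter_upwards with L
    have : 0 ≤ Real.log ((L : ℝ) + 1) := Real.log_nonneg (by linarith [Nat.cast_nonneg (α := ℝ) L])
    positivity
  · filter_upwards [eventually_ge_atTop 1] with L hL
    have hL' : (1 : ℝ) ≤ L := by exact_mod_cast hL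
    rw [← add_div]
    apply div_le_div_of_nonneg_right _ (by positivity)
    have : Real.log ((L : ℝ) + 1) ≤ Real.log (L * 2) := Real.log_le_log (by positivity) (by linarith)
    rw [Real.log_mul (by positivity) (by norm_num)] at this
    linarith

lemma log_fact_asymp (a : ℕ → ℕ) (x : ℝ) (ha : ∀ L, a L ≤ L)
    (hx : Tendsto (fun L => (a L : ℝ) / L) atTop (𝓝 x)) :
    Tendsto (fun L : ℕ => (Real.log ((a L).factorial : ℝ) - a L * Real.log L + a L) / (L : ℝ)) atTop
      (𝓝 (x * Real.log x)) := by
  have h1 : Tendsto (fun L : ℕ => ((a L : ℝ) / L) * Real.log ((a L : ℝ) / L)) atTop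
      (𝓝 (x * Real.log x)) := (Real.continuous_mul_log.tendsto x).comp hx
  have h2 : Tendsto (fun L : ℕ => (Real.log ((a L).factorial : ℝ) - a L * Real.log (a L) + a L) / (L : ℝ))
      atTop (𝓝 0) := by
    refine tendsto_of_tendsto_of_tendsto_of_le_of_le tendsto_const_nhds tendsto_log_succ ?_ ?_
    · intro L
      have := log_fact_lower (a L)
      apply div_nonneg _ (Nat.cast_nonneg _)
      linarith
    · intro L
      apply div_le_div_of_nonneg_right _ (Nat.cast_nonneg _)
      have hl : 0 ≤ Real.log ((L : ℝ) + 1) := Real.log_nonneg (by linarith [Nat.cast_nonneg (α := ℝ) L])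
      rcases Nat.eq_zero_or_pos (a L) with h | h
      · rw [h]; simp; linarith
      · have := log_fact_upper (a L) h
        have h3 : Real.log (a L) ≤ Real.log ((L : ℝ) + 1) := by
          apply Real.log_le_log (by exact_mod_cast h)
          have : (a L : ℝ) ≤ L := by exact_mod_cast ha L
          linarith
        linarith
  have h3 := h1.add h2
  rw [add_zero] at h3
  refine h3.congr' ?_
  filter_upwards [eventually_ge_atTop 1] with L hL
  have hL' : (0 : ℝ) < L := by exact_mod_cast hL
  rcases Nat.eq_zero_or_pos (a L) with h | h
  · rw [h]; simp
  · have h' : (0 : ℝ) < a L := by exact_mod_cast h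
    rw [Real.log_div h'.ne' hL'.ne']
    field_simp
    ring

lemma choose_asymp (a b : ℕ → ℕ) (x y : ℝ) (hab : ∀ L, a L + b L ≤ L)
    (hx : Tendsto (fun L => (a L : ℝ) / L) atTop (𝓝 x))
    (hy : Tendsto (fun L => (b L : ℝ) / L) atTop (𝓝 y)) :
    Tendsto (fun L : ℕ => Real.logb 2 ((a L + b L).choose (b L) : ℕ) / (L : ℝ)) atTop
      (𝓝 ((x + y) * Real.logb 2 (x + y) - x * Real.logb 2 x - y * Real.logb 2 y)) := by
  have h1 := log_fact_asymp a x (fun L => by have := hab L; omega) hx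
  have h2 := log_fact_asymp b y (fun L => by have := hab L; omega) hy
  have h3 := log_fact_asymp (fun L => a L + b L) (x + y) hab (by
    refine (hx.add hy).congr (fun L => ?_)
    push_cast; ring)
  have h4 := ((h3.sub h1).sub h2).div_const (Real.log 2)
  rw [show ((x + y) * Real.log (x + y) - x * Real.log x - y * Real.log y) / Real.log 2 =
    (x + y) * Real.logb 2 (x + y) - x * Real.logb 2 x - y * Real.logb 2 y by
      unfold Real.logb; ring] at h4
  refine h4.congr (fun L => ?_)
  have hc : ((a L + b L).choose (b L) : ℝ) * (a L).factorial * (b L).factorial = (a L + b L).factorial := by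
    have := Nat.add_choose_mul_factorial_mul_factorial (a L) (b L)
    exact_mod_cast this
  have hp : (0 : ℝ) < ((a L + b L).choose (b L) : ℝ) := by
    exact_mod_cast Nat.choose_pos (by omega)
  rw [← hc, Real.log_mul (by positivity) (by positivity), Real.log_mul (by positivity) (by positivity)]
  unfold Real.logb
  push_cast
  ring

end asymp

section curves

open Filter Topology

lemma xlogx_div (t c : ℝ) (hc : 0 < c) :
    t / c * Real.logb 2 (t / c) = (t * Real.logb 2 t - t * Real.logb 2 c) / c := by
  rcases eq_or_ne t 0 with rfl | ht
  · simp
  · rw [Real.logb_div ht hc.ne']; field_simp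

lemma logb_two_four : Real.logb 2 4 = 2 := by
  rw [show (4 : ℝ) = 2 ^ (2 : ℕ) by norm_num, Real.logb_pow]; simp

lemma logb_two_six : Real.logb 2 6 = 1 + Real.logb 2 3 := by
  rw [show (6 : ℝ) = 2 * 3 by norm_num, Real.logb_mul (by norm_num) (by norm_num)]; simp

lemma logb_two_two : Real.logb 2 2 = 1 := by simp

lemma alpha_eq (p : ℝ) : alphaCurve p =
    (2 - (((1 - p) / 4 + (1 - p) / 4) * Real.logb 2 ((1 - p) / 4 + (1 - p) / 4)
        - (1 - p) / 4 * Real.logb 2 ((1 - p) / 4) - (1 - p) / 4 * Real.logb 2 ((1 - p) / 4))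
      + 2 * (((2 - p) / 4 + (1 - p) / 4) * Real.logb 2 ((2 - p) / 4 + (1 - p) / 4)
        - (2 - p) / 4 * Real.logb 2 ((2 - p) / 4) - (1 - p) / 4 * Real.logb 2 ((1 - p) / 4))) / 2 := by
  unfold alphaCurve hent
  simp only [List.map_cons, List.map_nil, List.sum_cons, List.sum_nil]
  rw [show (1 - p) / 4 + (1 - p) / 4 = (1 - p) / 2 by ring,
    show (2 - p) / 4 + (1 - p) / 4 = (3 - 2 * p) / 4 by ring,
    xlogx_div 1 4 (by norm_num), xlogx_div 3 4 (by norm_num), xlogx_div (1 - p) 2 (by norm_num),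
    xlogx_div p 2 (by norm_num), xlogx_div (2 - p) 4 (by norm_num),
    xlogx_div (3 - 2 * p) 6 (by norm_num), xlogx_div p 3 (by norm_num),
    xlogx_div (1 - p) 4 (by norm_num), xlogx_div (3 - 2 * p) 4 (by norm_num),
    logb_two_four, logb_two_six, logb_two_two, Real.logb_one]
  ring

lemma beta_eq (p : ℝ) : betaCurve p =
    (2 - ((1 / 4 + (1 - p) / 4) * Real.logb 2 (1 / 4 + (1 - p) / 4)
        - 1 / 4 * Real.logb 2 (1 / 4) - (1 - p) / 4 * Real.logb 2 ((1 - p) / 4))) / 2 := by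
  unfold betaCurve hent
  simp only [List.map_cons, List.map_nil, List.sum_cons, List.sum_nil]
  rw [show 1 / 4 + (1 - p) / 4 = (2 - p) / 4 by ring,
    xlogx_div 1 4 (by norm_num), xlogx_div (1 - p) 2 (by norm_num),
    xlogx_div p 2 (by norm_num), xlogx_div (2 - p) 4 (by norm_num),
    xlogx_div (1 - p) 4 (by norm_num),
    logb_two_four, logb_two_two, Real.logb_one]
  ring

lemma tendsto_quarter : Tendsto (fun L : ℕ => ((L / 4 : ℕ) : ℝ) / L) atTop (𝓝 (1 / 4)) := by
  have h := (tendsto_nat_floor_mul_div_atTop (R := ℝ) (a := 1 / 4) (by norm_num)).comp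
    (tendsto_natCast_atTop_atTop (R := ℝ))
  refine h.congr (fun L => ?_)
  simp only [Function.comp]
  congr 2
  rw [show (1 / 4 : ℝ) * L = (L : ℝ) / (4 : ℕ) by push_cast; ring, Nat.floor_div_natCast, Nat.floor_natCast]

lemma tendsto_k (c : ℝ) (hc : 0 ≤ c) :
    Tendsto (fun L : ℕ => ((⌊c * ((L / 4 : ℕ) : ℝ)⌋₊ : ℕ) : ℝ) / L) atTop (𝓝 (c / 4)) := by
  have h := (tendsto_nat_floor_mul_div_atTop (R := ℝ) hc).comp
    (tendsto_natCast_atTop_atTop (R := ℝ))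
  have h4 : Tendsto (fun L : ℕ => L / 4) atTop atTop := Nat.tendsto_div_const_atTop (by norm_num)
  have h5 := (h.comp h4).mul tendsto_quarter
  rw [show c * (1 / 4) = c / 4 by ring] at h5
  refine h5.congr' ?_
  filter_upwards [eventually_ge_atTop 4] with L hL
  have : 1 ≤ L / 4 := by omega
  have h6 : (((L / 4 : ℕ) : ℝ)) ≠ 0 := by positivity
  simp only [Function.comp]
  field_simp

end curves

section final

open Filter Topology

lemma final_limits (p : ℝ) (mm kk : ℕ → ℕ)
    (hmk : ∀ L, 2 * mm L + 2 * kk L ≤ L) (hkm : ∀ L, kk L ≤ mm L)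
    (hm : Tendsto (fun L => (mm L : ℝ) / L) atTop (𝓝 (1 / 4)))
    (hk : Tendsto (fun L => (kk L : ℝ) / L) atTop (𝓝 ((1 - p) / 4))) :
    Tendsto (fun L : ℕ => ((Real.logb 2 (4 * L + 1) + 2 * L - Real.logb 2 ((2 * kk L).choose (kk L) : ℕ)
          + 2 * Real.logb 2 ((mm L + 2 * kk L).choose (kk L) : ℕ) + 8) / 2) / (L : ℝ)) atTop
        (𝓝 (alphaCurve p)) ∧
    Tendsto (fun L : ℕ => ((Real.logb 2 (4 * L + 1) + 2 * L
        - Real.logb 2 ((mm L + kk L).choose (kk L) : ℕ) + 5) / 2) / (L : ℝ)) atTop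
        (𝓝 (betaCurve p)) := by
  have c1 := choose_asymp kk kk _ _ (fun L => by have := hmk L; omega) hk hk
  have hmk' : Tendsto (fun L => ((mm L + kk L : ℕ) : ℝ) / L) atTop (𝓝 ((2 - p) / 4)) := by
    have := hm.add hk
    rw [show 1 / 4 + (1 - p) / 4 = (2 - p) / 4 by ring] at this
    refine this.congr (fun L => ?_)
    push_cast; ring
  have c2 := choose_asymp (fun L => mm L + kk L) kk _ _
    (fun L => by have := hmk L; have := hkm L; omega) hmk' hk
  have c3 := choose_asymp mm kk _ _ (fun L => by have := hmk L; omega) hm hk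
  have hlog : Tendsto (fun L : ℕ => Real.logb 2 (4 * L + 1) / (L : ℝ)) atTop (𝓝 0) := by
    have h1 := (tendsto_log_succ.add (tendsto_const_div_atTop_nhds_zero_nat (Real.log 4))).div_const
      (Real.log 2)
    rw [show ((0 : ℝ) + 0) / Real.log 2 = 0 by simp] at h1
    refine tendsto_of_tendsto_of_tendsto_of_le_of_le tendsto_const_nhds h1 ?_ ?_
    · intro L
      have : 0 ≤ Real.logb 2 (4 * (L : ℝ) + 1) :=
        Real.logb_nonneg (by norm_num) (by linarith [Nat.cast_nonneg (α := ℝ) L])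
      positivity
    · intro L
      have hL : (0 : ℝ) ≤ L := Nat.cast_nonneg L
      have h2 : Real.log (4 * (L : ℝ) + 1) ≤ Real.log (4 * ((L : ℝ) + 1)) :=
        Real.log_le_log (by positivity) (by linarith)
      rw [Real.log_mul (by norm_num) (by positivity)] at h2
      have hl2 : 0 < Real.log 2 := Real.log_pos (by norm_num)
      simp only [Real.logb]
      rw [← add_div, div_right_comm]
      gcongr
      linarith
  have hc8 := tendsto_const_div_atTop_nhds_zero_nat (8 : ℝ)
  have hc5 := tendsto_const_div_atTop_nhds_zero_nat (5 : ℝ)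
  have hone : Tendsto (fun _ : ℕ => (2 : ℝ)) atTop (𝓝 2) := tendsto_const_nhds
  constructor
  · rw [alpha_eq]
    have h := ((((hlog.add hone).sub c1).add (c2.const_mul 2)).add hc8).div_const 2
    rw [zero_add, add_zero] at h
    refine h.congr' ?_
    filter_upwards [eventually_ge_atTop 1] with L hL
    have hL' : (L : ℝ) ≠ 0 := by positivity
    rw [show kk L + kk L = 2 * kk L by ring, show mm L + kk L + kk L = mm L + 2 * kk L by ring]
    field_simp
  · rw [beta_eq]
    have h := (((hlog.add hone).sub c3).add hc5).div_const 2
    rw [zero_add, add_zero] at h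
    refine h.congr' ?_
    filter_upwards [eventually_ge_atTop 1] with L hL
    have hL' : (L : ℝ) ≠ 0 := by positivity
    field_simp

end final

/-- For every `p ∈ [0,1]`, the pair `(ᾱ(p), β̄(p))` belongs to the
achievable storage-retrieval rate region `R` of the (2,2) PIR problem. -/
theorem statement9 (p : ℝ) (hp : p ∈ Set.Icc (0:ℝ) 1) :
    (alphaCurve p, betaCurve p) ∈ Region := by
  obtain ⟨hp0, hp1⟩ := hp
  have hkm : ∀ L : ℕ, ⌊(1 - p) * ((L / 4 : ℕ) : ℝ)⌋₊ ≤ L / 4 := by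
    intro L
    apply Nat.floor_le_of_le
    have : (0 : ℝ) ≤ ((L / 4 : ℕ) : ℝ) := Nat.cast_nonneg _
    nlinarith
  have hmk : ∀ L : ℕ, 2 * (L / 4) + 2 * ⌊(1 - p) * ((L / 4 : ℕ) : ℝ)⌋₊ ≤ L := by
    intro L
    have := hkm L
    omega
  obtain ⟨hA, hB⟩ := final_limits p (fun L => L / 4)
    (fun L => ⌊(1 - p) * ((L / 4 : ℕ) : ℝ)⌋₊) hmk hkm tendsto_quarter
    (tendsto_k (1 - p) (by linarith))
  intro ε hε
  have eA := hA.eventually (gt_mem_nhds (show alphaCurve p < alphaCurve p + ε by linarith))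
  have eB := hB.eventually (gt_mem_nhds (show betaCurve p < betaCurve p + ε by linarith))
  obtain ⟨L₀, hL₀⟩ := Filter.eventually_atTop.1
    ((eA.and eB).and (Filter.eventually_ge_atTop 1))
  refine ⟨L₀, fun L hL => ?_⟩
  obtain ⟨⟨h1, h2⟩, h3⟩ := hL₀ L hL
  have hLpos : (0 : ℝ) < L := by exact_mod_cast h3
  obtain ⟨C, hC, hs, hb⟩ := code_rate L (L / 4) ⌊(1 - p) * ((L / 4 : ℕ) : ℝ)⌋₊ (hmk L)
  refine ⟨C, hC, hs.trans ?_, hb.trans ?_⟩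
  · rw [div_lt_iff₀ hLpos, mul_comm (_ + ε) (L : ℝ)] at h1
    exact h1.le
  · rw [div_lt_iff₀ hLpos, mul_comm (_ + ε) (L : ℝ)] at h2
    exact h2.le

end PIR
end

section
/- The pair (1/4 + (3/4)·log₂ 3, 3/4) belongs to the achievable storage-retrieval rate region R of the (2,2) PIR problem. -/
open scoped BigOperators

namespace PIR

variable {L : ℕ} {Q : Type} [Fintype Q] [DecidableEq Q]

/-! ### Building a code from abstract finite storage and answer types -/

lemma stdP_sum (k : Fin 2) : ∑ qq : Fin 2 × Fin 2, stdP k qq = 1 := by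
  rw [Fintype.sum_prod_type]
  fin_cases k <;> simp [stdP, Fin.sum_univ_two] <;> norm_num

lemma stdP_marg (n q : Fin 2) :
    (∑ qq : Fin 2 × Fin 2, if (if n = 0 then qq.1 else qq.2) = q then stdP 0 qq else 0) =
    (∑ qq : Fin 2 × Fin 2, if (if n = 0 then qq.1 else qq.2) = q then stdP 1 qq else 0) := by
  rw [Fintype.sum_prod_type, Fintype.sum_prod_type]
  fin_cases n <;> fin_cases q <;> simp [stdP, Fin.sum_univ_two]

lemma exists_encoding (S : Type) [Fintype S] [Nonempty S] (σ : ℕ)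
    (h : Fintype.card S ≤ 2 ^ σ) :
    ∃ (e : S → (Fin σ → ZMod 2)) (d : (Fin σ → ZMod 2) → S), ∀ s, d (e s) = s := by
  have : Fintype.card S ≤ Fintype.card (Fin σ → ZMod 2) := by simpa [ZMod.card] using h
  obtain ⟨e⟩ := Function.Embedding.nonempty_of_card_le this
  exact ⟨e, Function.invFun e, Function.leftInverse_invFun e.injective⟩

/-- Choose between two numbers. -/
def sel (a b : ℕ) : Fin 2 → ℕ
  | 0 => a
  | 1 => b

lemma mkCode_s10 (L : ℕ) (S0 S1 A0 A1 : Type) [Fintype S0] [Fintype S1] [Fintype A0] [Fintype A1]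
    (f0 : Msg L × Msg L → S0) (f1 : Msg L × Msg L → S1)
    (g0 : Fin 2 → S0 → A0) (g1 : Fin 2 → S1 → A1)
    (hc : ∀ k q₁ q₂ w w', ((k = 0 ∧ q₁ = q₂) ∨ (k = 1 ∧ q₁ ≠ q₂)) →
      g0 q₁ (f0 w) = g0 q₁ (f0 w') → g1 q₂ (f1 w) = g1 q₂ (f1 w') →
      target k w = target k w')
    (σ0 σ1 β0 β1 : ℕ) (hS0 : Fintype.card S0 ≤ 2 ^ σ0) (hS1 : Fintype.card S1 ≤ 2 ^ σ1)
    (hA0 : Fintype.card A0 ≤ 2 ^ β0) (hA1 : Fintype.card A1 ≤ 2 ^ β1) :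
    ∃ C : Code L, IsZeroError C.base ∧ C.base.stor 0 = σ0 ∧ C.base.stor 1 = σ1 ∧
      betaRate C.base 0 = β0 ∧ betaRate C.base 1 = β1 := by
  classical
  have : Nonempty S0 := ⟨f0 0⟩
  have : Nonempty S1 := ⟨f1 0⟩
  have : Nonempty A0 := ⟨g0 0 (f0 0)⟩
  have : Nonempty A1 := ⟨g1 0 (f1 0)⟩
  obtain ⟨es0, ds0, hs0⟩ := exists_encoding S0 σ0 hS0
  obtain ⟨es1, ds1, hs1⟩ := exists_encoding S1 σ1 hS1
  obtain ⟨ea0, da0, ha0⟩ := exists_encoding A0 β0 hA0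
  obtain ⟨ea1, da1, ha1⟩ := exists_encoding A1 β1 hA1
  let B : CodeBase L (Fin 2) :=
    { P := stdP
      P_nonneg := by
        intro k qq; unfold stdP; split_ifs <;> norm_num
      P_sum := stdP_sum
      stor := sel σ0 σ1
      phi := fun n => match n with
        | 0 => fun w => es0 (f0 w)
        | 1 => fun w => es1 (f1 w)
      blen := fun n _ => sel β0 β1 n
      ans := fun n q => match n with
        | 0 => fun s => ea0 (g0 q (ds0 s))
        | 1 => fun s => ea1 (g1 q (ds1 s))
      dec := fun k q₁ q₂ a₁ a₂ =>
        if h : ∃ w, ea0 (g0 q₁ (f0 w)) = a₁ ∧ ea1 (g1 q₂ (f1 w)) = a₂ then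
          target k h.choose else 0
      privacy := by
        intro n q s
        rw [stdP_marg] }
  refine ⟨{ Q := Fin 2, base := B }, ?_, rfl, rfl, ?_, ?_⟩
  · intro k w qq hP
    have hP' : ((k = 0 ∧ qq.1 = qq.2) ∨ (k = 1 ∧ qq.1 ≠ qq.2)) := by
      by_contra hcon
      exact hP (if_neg hcon)
    have hex : ∃ w', ea0 (g0 qq.1 (f0 w')) = ea0 (g0 qq.1 (ds0 (es0 (f0 w)))) ∧
        ea1 (g1 qq.2 (f1 w')) = ea1 (g1 qq.2 (ds1 (es1 (f1 w)))) :=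
      ⟨w, by rw [hs0], by rw [hs1]⟩
    have hr : retrieved B k qq w = target k hex.choose := dif_pos hex
    change retrieved B k qq w = _
    rw [hr]
    have h2 := hex.choose_spec
    refine hc k qq.1 qq.2 _ _ hP' ?_ ?_
    · have := congrArg da0 h2.1
      rw [ha0, ha0] at this
      exact this.trans (by rw [hs0])
    · have := congrArg da1 h2.2
      rw [ha1, ha1] at this
      exact this.trans (by rw [hs1])
  · change ∑ qq : Fin 2 × Fin 2, stdP 0 qq * (β0 : ℝ) = β0
    rw [← Finset.sum_mul, stdP_sum, one_mul]
  · change ∑ qq : Fin 2 × Fin 2, stdP 0 qq * (β1 : ℝ) = β1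
    rw [← Finset.sum_mul, stdP_sum, one_mul]

/-! ### A covering lemma (union bound) -/

lemma cover {A B : Type} [Fintype A] [Fintype B] [Nonempty B] (R : A → B → Prop)
    [∀ a, DecidablePred (R a)] (n k : ℕ) (hn : 0 < n) (hk : 0 < k)
    (h : ∀ a, Fintype.card B ≤ n * (Finset.univ.filter (fun b => R a b)).card)
    (hA : Fintype.card A ≤ 2 ^ k) :
    ∃ l : Fin (n * k) → B, ∀ a, ∃ t, R a (l t) := by
  classical
  by_contra hcon
  push Not at hcon
  let Bad : A → Finset (Fin (n * k) → B) := fun a =>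
    Fintype.piFinset (fun _ => Finset.univ.filter (fun b => ¬ R a b))
  have hcov : (Finset.univ : Finset (Fin (n * k) → B)) ⊆ Finset.univ.biUnion Bad := by
    intro l _
    obtain ⟨a, ha⟩ := hcon l
    simp only [Finset.mem_biUnion, Finset.mem_univ, true_and]
    refine ⟨a, ?_⟩
    simp [Bad, Fintype.mem_piFinset, ha]
  have h1 := (Finset.card_le_card hcov).trans Finset.card_biUnion_le
  have hB : (0 : ℝ) < Fintype.card B := by exact_mod_cast Fintype.card_pos
  have hn' : (0 : ℝ) < n := by exact_mod_cast hn
  have hbad : ∀ a, ((Bad a).card : ℝ) ≤ (Fintype.card B : ℝ) ^ (n * k) * Real.exp (-k) := by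
    intro a
    have e1 : (Bad a).card = (Finset.univ.filter (fun b => ¬ R a b)).card ^ (n * k) := by
      simp [Bad, Fintype.card_piFinset]
    have e2 := Finset.card_filter_add_card_filter_not (s := (Finset.univ : Finset B)) (R a)
    rw [Finset.card_univ] at e2
    have e2' : ((Finset.univ.filter (fun b => R a b)).card : ℝ)
      + ((Finset.univ.filter (fun b => ¬ R a b)).card : ℝ) = Fintype.card B := by
      exact_mod_cast e2
    have e3 : (Fintype.card B : ℝ) ≤ n * (Finset.univ.filter (fun b => R a b)).card := by
      exact_mod_cast h a
    have e4 : ((Finset.univ.filter (fun b => ¬ R a b)).card : ℝ)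
        ≤ Fintype.card B * Real.exp (-(1 / n)) := by
      have : 1 - 1 / (n : ℝ) ≤ Real.exp (-(1 / n)) := by
        have := Real.add_one_le_exp (-(1 / (n : ℝ)))
        linarith
      have e5 : (Fintype.card B : ℝ) / n ≤ (Finset.univ.filter (fun b => R a b)).card := by
        rw [div_le_iff₀ hn']; linarith
      calc ((Finset.univ.filter (fun b => ¬ R a b)).card : ℝ)
          ≤ Fintype.card B * (1 - 1 / (n : ℝ)) := by
            rw [mul_sub, mul_one, mul_one_div]; linarith
        _ ≤ _ := by gcongr
    rw [e1]; push_cast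
    calc ((Finset.univ.filter (fun b => ¬ R a b)).card : ℝ) ^ (n * k)
        ≤ (Fintype.card B * Real.exp (-(1 / n))) ^ (n * k) := by gcongr
      _ = _ := by
        rw [mul_pow, ← Real.exp_nat_mul]
        congr 2
        push_cast
        field_simp
  have h2 : (Fintype.card B : ℝ) ^ (n * k) ≤
      (2 : ℝ) ^ k * ((Fintype.card B : ℝ) ^ (n * k) * Real.exp (-k)) := by
    have h1' : (Fintype.card B : ℝ) ^ (n * k) ≤ ∑ a, ((Bad a).card : ℝ) := by
      have : Fintype.card B ^ (n * k) ≤ ∑ a, (Bad a).card := by simpa using h1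
      exact_mod_cast this
    refine h1'.trans ((Finset.sum_le_sum (fun a _ => hbad a)).trans ?_)
    rw [Finset.sum_const, Finset.card_univ, nsmul_eq_mul]
    have : (Fintype.card A : ℝ) ≤ 2 ^ k := by exact_mod_cast hA
    gcongr
  have h3 : (2 : ℝ) ^ k * Real.exp (-k) < 1 := by
    have : Real.exp (-(k : ℝ)) = (Real.exp (-1)) ^ k := by
      rw [← Real.exp_nat_mul]; ring_nf
    rw [this, ← mul_pow]
    apply pow_lt_one₀ (by positivity) _ hk.ne'
    have := Real.exp_one_gt_d9
    rw [Real.exp_neg, ← div_eq_mul_inv, div_lt_one (Real.exp_pos _)]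
    linarith
  have hp : (0 : ℝ) < (Fintype.card B : ℝ) ^ (n * k) := by positivity
  nlinarith

/-! ### The combinatorial scheme -/

abbrev V (m : ℕ) := Fin (4 * m) → ZMod 2

/-- Positions where the pair of words equals `(u, v)`. -/
def cell {m : ℕ} (u v : ZMod 2) (p : V m × V m) : Finset (Fin (4 * m)) :=
  Finset.univ.filter (fun i => p.1 i = u ∧ p.2 i = v)

/-- Balanced pairs. -/
def Bal {m : ℕ} (p : V m × V m) : Prop := ∀ u v, (cell u v p).card = m

def XX {m : ℕ} (q : ZMod 2) (p : V m × V m) : Finset (Fin (4 * m)) := cell q q p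

def YY {m : ℕ} (q : ZMod 2) (p : V m × V m) : Finset (Fin (4 * m)) := cell q (q + 1) p

def Dec {m M : ℕ} (h : Finset (Fin (4 * m)) → Fin M) (p : V m × V m) : Prop :=
  ∀ q r : ZMod 2, ∀ y : Finset (Fin (4 * m)), y ∈ Finset.powersetCard m (XX q p)ᶜ →
    h y = h (YY r p) → y = YY r p

lemma card_collide {α : Type} [Fintype α] [DecidableEq α] (M : ℕ) (y y' : α) (hy : y ≠ y') :
    (Finset.univ.filter (fun h : α → Fin M => h y = h y')).card * M ≤
      Fintype.card (α → Fin M) := by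
  have : (Finset.univ.filter (fun h : α → Fin M => h y = h y')).card * M =
      ((Finset.univ.filter (fun h : α → Fin M => h y = h y')) ×ˢ
        (Finset.univ : Finset (Fin M))).card := by simp
  rw [this, ← Finset.card_univ]
  apply Finset.card_le_card_of_injOn (fun z => Function.update z.1 y z.2)
  · intro _ _; simp
  · rintro ⟨f, c⟩ hf ⟨g, d⟩ hg hfg
    simp only [Finset.coe_product, Set.mem_prod, Finset.mem_coe, Finset.mem_filter,
      Finset.mem_univ, true_and, and_true] at hf hg
    simp only at hfg
    have hcd : c = d := by
      have := congrFun hfg y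
      simpa using this
    have hne : ∀ x, x ≠ y → f x = g x := by
      intro x hx
      have := congrFun hfg x
      simpa [hx] using this
    refine Prod.ext ?_ hcd
    funext x
    by_cases hx : x = y
    · subst hx
      simp only
      rw [hf, hg]
      exact hne _ hy.symm
    · exact hne x hx

open Classical in
lemma card_notDec {m : ℕ} (M : ℕ) (hM : M = 8 * (3 * m).choose m)
    (p : V m × V m) (hp : Bal p) :
    2 * (Finset.univ.filter (fun h : Finset (Fin (4 * m)) → Fin M =>
      ¬ Dec h p)).card ≤
      Fintype.card (Finset (Fin (4 * m)) → Fin M) := by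
  have hc : 0 < (3 * m).choose m := Nat.choose_pos (by omega)
  let I : Finset (ZMod 2 × ZMod 2 × Finset (Fin (4 * m))) :=
    (Finset.univ : Finset (ZMod 2 × ZMod 2)).biUnion (fun z =>
      ((Finset.powersetCard m (XX z.1 p)ᶜ).image (fun y => (z.1, z.2, y))))
  let F : ZMod 2 × ZMod 2 × Finset (Fin (4 * m)) → Finset (Finset (Fin (4 * m)) → Fin M) := fun z =>
    if z.2.2 = YY z.2.1 p then ∅ else Finset.univ.filter (fun h => h z.2.2 = h (YY z.2.1 p))
  have hI : I.card ≤ 4 * (3 * m).choose m := by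
    refine Finset.card_biUnion_le.trans ?_
    calc _ ≤ ∑ z : ZMod 2 × ZMod 2, (3 * m).choose m := by
            apply Finset.sum_le_sum
            intro z _
            refine Finset.card_image_le.trans ?_
            rw [Finset.card_powersetCard, Finset.card_compl, Fintype.card_fin,
              show (XX z.1 p).card = m from hp _ _, show 4 * m - m = 3 * m by omega]
      _ = _ := by simp
  have hsub : (Finset.univ.filter (fun h : Finset (Fin (4 * m)) → Fin M => ¬ Dec h p)) ⊆ I.biUnion F := by
    intro h hh
    have hh := (Finset.mem_filter.mp hh).2
    unfold Dec at hh
    push Not at hh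
    obtain ⟨q, r, y, hy, h1, h2⟩ := hh
    simp only [Finset.mem_biUnion]
    refine ⟨(q, r, y), ?_, ?_⟩
    · simp only [I, Finset.mem_biUnion, Finset.mem_univ, true_and, Finset.mem_image]
      exact ⟨(q, r), y, hy, rfl⟩
    · simp [F, h2, h1]
  have hF : ∀ z ∈ I, (F z).card * M ≤ Fintype.card (Finset (Fin (4 * m)) → Fin M) := by
    intro z _
    simp only [F]
    split_ifs with hz
    · simp
    · exact card_collide M _ _ hz
  have h1 := (Finset.card_le_card hsub).trans Finset.card_biUnion_le
  have h2 : (Finset.univ.filter (fun h : Finset (Fin (4 * m)) → Fin M => ¬ Dec h p)).card * M ≤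
      4 * (3 * m).choose m * Fintype.card (Finset (Fin (4 * m)) → Fin M) := by
    calc _ ≤ (∑ z ∈ I, (F z).card) * M := Nat.mul_le_mul_right _ h1
      _ = ∑ z ∈ I, (F z).card * M := Finset.sum_mul ..
      _ ≤ ∑ z ∈ I, Fintype.card (Finset (Fin (4 * m)) → Fin M) := Finset.sum_le_sum hF
      _ = I.card * Fintype.card (Finset (Fin (4 * m)) → Fin M) := by simp
      _ ≤ _ := Nat.mul_le_mul_right _ hI
  have h3 : (4 * (3 * m).choose m) * (2 * (Finset.univ.filter (fun h : Finset (Fin (4 * m)) → Fin M => ¬ Dec h p)).card) ≤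
      (4 * (3 * m).choose m) * Fintype.card (Finset (Fin (4 * m)) → Fin M) := by
    calc _ = (Finset.univ.filter (fun h : Finset (Fin (4 * m)) → Fin M => ¬ Dec h p)).card * M := by
            generalize (Finset.univ.filter
              (fun h : Finset (Fin (4 * m)) → Fin M => ¬ Dec h p)).card = c
            rw [hM]; ring
      _ ≤ _ := h2
  exact Nat.le_of_mul_le_mul_left h3 (by positivity)

open Classical in
lemma card_bal (m : ℕ) (hm : 0 < m) :
    256 ^ m ≤ 16 * m ^ 3 * (Finset.univ.filter (fun p : V m × V m => Bal p)).card := by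
  let D : Finset (Σ _ : Finset (Fin (4 * m)), Finset (Fin (4 * m)) × Finset (Fin (4 * m))) :=
    (Finset.powersetCard (2 * m) Finset.univ).sigma (fun A =>
      Finset.powersetCard m A ×ˢ Finset.powersetCard m Aᶜ)
  have hD : D.card = (4 * m).choose (2 * m) * ((2 * m).choose m * (2 * m).choose m) := by
    simp only [D, Finset.card_sigma, Finset.card_product, Finset.card_powersetCard]
    rw [Finset.sum_congr rfl (g := fun _ => (2 * m).choose m * (2 * m).choose m)]
    · simp
    · intro A hA
      rw [Finset.mem_powersetCard] at hA
      rw [Finset.card_compl, Fintype.card_fin, hA.2, show 4 * m - 2 * m = 2 * m by omega]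
  have hle : D.card ≤ (Finset.univ.filter (fun p : V m × V m => Bal p)).card := by
    apply Finset.card_le_card_of_injOn (fun z =>
      ((fun i => if i ∈ z.1 then 1 else 0), (fun i => if i ∈ z.2.1 ∪ z.2.2 then 1 else 0)))
    · rintro ⟨A, B, C⟩ hz
      simp only [D, Finset.coe_sigma, Set.mem_sigma_iff, Finset.mem_coe, Finset.mem_product,
        Finset.mem_powersetCard] at hz
      obtain ⟨⟨-, hA⟩, ⟨hBA, hB⟩, hCA, hC⟩ := hz
      have hCA' : ∀ i ∈ C, i ∉ A := fun i hi => by simpa using hCA hi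
      simp only [Finset.coe_filter, Finset.mem_univ, true_and, Set.mem_ofPred_eq]
      intro u v
      have e11 : cell (m := m) 1 1 ((fun i => if i ∈ A then 1 else 0),
          (fun i => if i ∈ B ∪ C then 1 else 0)) = B := by
        ext i
        have := @hBA i
        have := hCA' i
        simp [cell]; tauto
      have e10 : cell (m := m) 1 0 ((fun i => if i ∈ A then 1 else 0),
          (fun i => if i ∈ B ∪ C then 1 else 0)) = A \ B := by
        ext i
        have := @hBA i
        have := hCA' i
        simp [cell]; tauto
      have e01 : cell (m := m) 0 1 ((fun i => if i ∈ A then 1 else 0),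
          (fun i => if i ∈ B ∪ C then 1 else 0)) = C := by
        ext i
        have := @hBA i
        have := hCA' i
        simp [cell]; tauto
      have e00 : cell (m := m) 0 0 ((fun i => if i ∈ A then 1 else 0),
          (fun i => if i ∈ B ∪ C then 1 else 0)) = Aᶜ \ C := by
        ext i
        have := @hBA i
        have := hCA' i
        simp [cell]; tauto
      have c10 : (A \ B).card = m := by rw [Finset.card_sdiff_of_subset hBA]; omega
      have c00 : (Aᶜ \ C).card = m := by
        rw [Finset.card_sdiff_of_subset hCA, Finset.card_compl, Fintype.card_fin]; omega
      fin_cases u <;> fin_cases v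
      · exact (congrArg Finset.card e00).trans c00
      · exact (congrArg Finset.card e01).trans hC
      · exact (congrArg Finset.card e10).trans c10
      · exact (congrArg Finset.card e11).trans hB
    · rintro ⟨A, B, C⟩ hz ⟨A', B', C'⟩ hz' heq
      simp only [D, Finset.coe_sigma, Set.mem_sigma_iff, Finset.mem_coe, Finset.mem_product,
        Finset.mem_powersetCard] at hz hz'
      obtain ⟨-, ⟨hBA, -⟩, hCA, -⟩ := hz
      obtain ⟨-, ⟨hBA', -⟩, hCA', -⟩ := hz'
      simp only [Prod.mk.injEq] at heq
      have hA : A = A' := by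
        ext i
        have := congrFun heq.1 i
        by_cases h1 : i ∈ A <;> by_cases h2 : i ∈ A' <;> simp_all
      subst hA
      have hU : ∀ i, i ∈ B ∪ C ↔ i ∈ B' ∪ C' := by
        intro i
        have := congrFun heq.2 i
        by_cases h1 : i ∈ B ∪ C <;> by_cases h2 : i ∈ B' ∪ C' <;>
          simp only [h1, h2, if_true, if_false, one_ne_zero, zero_ne_one] at this ⊢
      have hB : B = B' := by
        ext i
        have := hU i
        have := @hBA i
        have := @hBA' i
        have := @hCA i
        have := @hCA' i
        simp only [Finset.mem_union, Finset.mem_compl] at *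
        tauto
      have hC : C = C' := by
        ext i
        have := hU i
        have := @hBA i
        have := @hBA' i
        have := @hCA i
        have := @hCA' i
        simp only [Finset.mem_union, Finset.mem_compl] at *
        tauto
      subst hB hC
      rfl
  have b1 := Nat.four_pow_le_two_mul_self_mul_centralBinom m hm
  have b2 := Nat.four_pow_le_two_mul_self_mul_centralBinom (2 * m) (by omega)
  rw [Nat.centralBinom_eq_two_mul_choose] at b1 b2
  rw [show 2 * (2 * m) = 4 * m by ring] at b2
  calc 256 ^ m = 4 ^ (2 * m) * (4 ^ m * 4 ^ m) := by
        rw [pow_mul, ← mul_pow, ← mul_pow]; norm_num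
    _ ≤ (4 * m * (4 * m).choose (2 * m)) *
        ((2 * m * (2 * m).choose m) * (2 * m * (2 * m).choose m)) := by gcongr
    _ = 16 * m ^ 3 * D.card := by rw [hD]; ring
    _ ≤ _ := by gcongr

open Classical in
lemma exists_list (m M : ℕ) (hm : 0 < m) (hM : M = 8 * (3 * m).choose m) :
    ∃ l : Fin ((32 * m ^ 3) * (8 * m)) → (Finset (Fin (4 * m)) → Fin M) × (V m × V m),
      ∀ w : V m × V m, ∃ t, Bal (w + (l t).2) ∧ Dec (l t).1 (w + (l t).2) := by
  have hc : 0 < (3 * m).choose m := Nat.choose_pos (by omega)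
  have : NeZero M := ⟨by omega⟩
  have hV : Fintype.card (V m × V m) = 256 ^ m := by
    simp only [Fintype.card_prod, Fintype.card_fun, ZMod.card, Fintype.card_fin]
    rw [pow_mul, ← mul_pow]; norm_num
  refine cover (fun (w : V m × V m) (b : (Finset (Fin (4 * m)) → Fin M) × (V m × V m)) =>
    Bal (w + b.2) ∧ Dec b.1 (w + b.2)) _ _ (by positivity) (by positivity) ?_ ?_
  · intro w
    have h1 : (Finset.univ.filter (fun b : (Finset (Fin (4 * m)) → Fin M) × (V m × V m) =>
        Bal (w + b.2) ∧ Dec b.1 (w + b.2))).card =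
        ∑ p ∈ Finset.univ.filter (fun p : V m × V m => Bal p),
          (Finset.univ.filter (fun h : Finset (Fin (4 * m)) → Fin M => Dec h p)).card := by
      rw [Finset.card_filter, Fintype.sum_prod_type_right]
      refine (Equiv.sum_comp (Equiv.addLeft w) (fun p => ∑ h : Finset (Fin (4 * m)) → Fin M,
        if Bal p ∧ Dec h p then 1 else 0)).trans ?_
      rw [Finset.sum_filter]
      apply Finset.sum_congr rfl
      intro p _
      by_cases hp : Bal p
      · simp [hp]
      · simp [hp]
    have h2 : (Finset.univ.filter (fun p : V m × V m => Bal p)).card *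
        Fintype.card (Finset (Fin (4 * m)) → Fin M) ≤
        2 * ∑ p ∈ Finset.univ.filter (fun p : V m × V m => Bal p),
          (Finset.univ.filter (fun h : Finset (Fin (4 * m)) → Fin M => Dec h p)).card := by
      rw [Finset.mul_sum, ← smul_eq_mul]
      apply Finset.card_nsmul_le_sum
      intro p hp
      have hp := (Finset.mem_filter.mp hp).2
      have e1 := card_notDec M hM p hp
      have e2 := Finset.card_filter_add_card_filter_not
        (s := (Finset.univ : Finset (Finset (Fin (4 * m)) → Fin M))) (fun h => Dec h p)
      rw [Finset.card_univ] at e2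
      omega
    rw [h1, Fintype.card_prod, hV]
    have h3 := card_bal m hm
    generalize (∑ p ∈ Finset.univ.filter (fun p : V m × V m => Bal p),
          (Finset.univ.filter (fun h : Finset (Fin (4 * m)) → Fin M => Dec h p)).card) = s at *
    generalize Fintype.card (Finset (Fin (4 * m)) → Fin M) = c at *
    generalize (Finset.univ.filter (fun p : V m × V m => Bal p)).card = b at *
    calc c * 256 ^ m ≤ c * (16 * m ^ 3 * b) := by gcongr
      _ = 16 * m ^ 3 * (b * c) := by ring
      _ ≤ 16 * m ^ 3 * (2 * s) := by gcongr
      _ = _ := by ring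
  · rw [hV, pow_mul]; norm_num

lemma decode_fst {m : ℕ} (q : ZMod 2) (p p' : V m × V m) (hX : XX q p = XX q p')
    (hY : YY q p = YY q p') : p.1 = p'.1 := by
  funext i
  have h1 := Finset.ext_iff.mp hX i
  have h2 := Finset.ext_iff.mp hY i
  simp only [XX, YY, cell, Finset.mem_filter, Finset.mem_univ, true_and] at h1 h2
  generalize p.1 i = a at *
  generalize p.2 i = b at *
  generalize p'.1 i = a' at *
  generalize p'.2 i = b' at *
  clear hX hY
  revert h1 h2
  revert q a b a' b'
  decide

lemma decode_snd {m : ℕ} (q r : ZMod 2) (hqr : q ≠ r) (p p' : V m × V m)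
    (hX : XX q p = XX q p') (hY : YY r p = YY r p') : p.2 = p'.2 := by
  funext i
  have h1 := Finset.ext_iff.mp hX i
  have h2 := Finset.ext_iff.mp hY i
  simp only [XX, YY, cell, Finset.mem_filter, Finset.mem_univ, true_and] at h1 h2
  generalize p.1 i = a at *
  generalize p.2 i = b at *
  generalize p'.1 i = a' at *
  generalize p'.2 i = b' at *
  clear hX hY
  have hr : r = q + 1 := by
    clear h1 h2
    revert q r
    decide
  subst hr
  clear hqr
  revert h1 h2
  revert q a b a' b'
  decide

/-- Zero padding. -/
def pad {L m : ℕ} (w : Msg L) : V m := fun i => if h : i.1 < L then w ⟨i.1, h⟩ else 0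

lemma pad_inj {L m : ℕ} (hL : L ≤ 4 * m) (w w' : Msg L)
    (h : (pad w : V m) = pad w') : w = w' := by
  funext i
  have := congrFun h ⟨i.1, by omega⟩
  simpa [pad] using this

lemma YY_mem {m : ℕ} (q r : ZMod 2) (p : V m × V m) (hp : Bal p) :
    YY r p ∈ Finset.powersetCard m (XX q p)ᶜ := by
  rw [Finset.mem_powersetCard]
  refine ⟨?_, hp _ _⟩
  intro i hi
  simp only [XX, YY, cell, Finset.mem_filter, Finset.mem_univ, true_and, Finset.mem_compl] at hi ⊢
  generalize p.1 i = a at *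
  generalize p.2 i = b at *
  clear hp
  revert q r a b
  decide

lemma XX_mem {m : ℕ} (p : V m × V m) (hp : Bal p) :
    XX 1 p ∈ Finset.powersetCard m (XX 0 p)ᶜ := by
  rw [Finset.mem_powersetCard]
  refine ⟨?_, hp _ _⟩
  intro i hi
  simp only [XX, cell, Finset.mem_filter, Finset.mem_univ, true_and, Finset.mem_compl] at hi ⊢
  generalize p.1 i = a at *
  generalize p.2 i = b at *
  clear hp
  revert a b
  decide

lemma scheme (L m : ℕ) (hm : 0 < m) (hL : L ≤ 4 * m) (σ0 σ1 β0 β1 : ℕ)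
    (hS0 : (32 * m ^ 3) * (8 * m) * ((4 * m).choose m * (3 * m).choose m) ≤ 2 ^ σ0)
    (hS1 : (8 * (3 * m).choose m) * (8 * (3 * m).choose m) ≤ 2 ^ σ1)
    (hA0 : (32 * m ^ 3) * (8 * m) * (4 * m).choose m ≤ 2 ^ β0)
    (hA1 : 8 * (3 * m).choose m ≤ 2 ^ β1) :
    ∃ C : Code L, IsZeroError C.base ∧ C.base.stor 0 = σ0 ∧ C.base.stor 1 = σ1 ∧
      betaRate C.base 0 = β0 ∧ betaRate C.base 1 = β1 := by
  classical
  obtain ⟨M, hM⟩ : ∃ M, M = 8 * (3 * m).choose m := ⟨_, rfl⟩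
  obtain ⟨T, hT⟩ : ∃ T, T = (32 * m ^ 3) * (8 * m) := ⟨_, rfl⟩
  obtain ⟨l, hl⟩ := exists_list m M hm hM
  rw [← hT] at hS0 hA0
  rw [← hM] at hS1 hA1
  revert l
  rw [← hT]
  intro l hl
  choose t ht using hl
  let D : Finset (Σ _ : Finset (Fin (4 * m)), Finset (Fin (4 * m))) :=
    (Finset.powersetCard m Finset.univ).sigma (fun A => Finset.powersetCard m Aᶜ)
  have hD : D.card = (4 * m).choose m * (3 * m).choose m := by
    simp only [D, Finset.card_sigma, Finset.card_powersetCard]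
    rw [Finset.sum_congr rfl (g := fun _ => (3 * m).choose m)]
    · simp
    · intro A hA
      rw [Finset.mem_powersetCard] at hA
      rw [Finset.card_compl, Fintype.card_fin, hA.2, show 4 * m - m = 3 * m by omega]
  let E : Finset (Finset (Fin (4 * m))) := Finset.powersetCard m Finset.univ
  have hE : E.card = (4 * m).choose m := by simp [E]
  let pw : Msg L × Msg L → V m × V m := fun w => (pad w.1, pad w.2)
  let sh : Msg L × Msg L → V m × V m := fun w => pw w + (l (t (pw w))).2
  have hbal : ∀ w, Bal (sh w) := fun w => (ht (pw w)).1
  have hdec : ∀ w, Dec (l (t (pw w))).1 (sh w) := fun w => (ht (pw w)).2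
  refine mkCode_s10 L (Fin T × {z // z ∈ D}) (Fin M × Fin M) (Fin T × {A // A ∈ E}) (Fin M)
    (fun w => (t (pw w), ⟨⟨XX 0 (sh w), XX 1 (sh w)⟩, Finset.mem_sigma.mpr
      ⟨Finset.mem_powersetCard.mpr ⟨Finset.subset_univ _, hbal w _ _⟩, XX_mem _ (hbal w)⟩⟩))
    (fun w => ((l (t (pw w))).1 (YY 0 (sh w)), (l (t (pw w))).1 (YY 1 (sh w))))
    (fun q s => (s.1, if q = 0 then ⟨s.2.1.1, (Finset.mem_sigma.mp s.2.2).1⟩ else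
      ⟨s.2.1.2, Finset.mem_powersetCard.mpr ⟨Finset.subset_univ _,
        (Finset.mem_powersetCard.mp (Finset.mem_sigma.mp s.2.2).2).2⟩⟩))
    (fun q s => if q = 0 then s.1 else s.2) ?_ σ0 σ1 β0 β1 ?_ ?_ ?_ ?_
  · intro k q₁ q₂ w w' hk h0 h1
    have htt : t (pw w) = t (pw w') := congrArg Prod.fst h0
    have hX : XX (q₁ : Fin 2) (sh w) = XX (q₁ : Fin 2) (sh w') := by
      have := congrArg Subtype.val (congrArg Prod.snd h0)
      fin_cases q₁
      · exact this
      · exact this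
    have hH : (l (t (pw w))).1 (YY (q₂ : Fin 2) (sh w')) =
        (l (t (pw w))).1 (YY (q₂ : Fin 2) (sh w)) := by
      rw [← htt] at h1
      fin_cases q₂
      · exact h1.symm
      · exact h1.symm
    have hY : YY (q₂ : Fin 2) (sh w') = YY (q₂ : Fin 2) (sh w) := by
      refine hdec w q₁ q₂ _ ?_ hH
      rw [hX]
      exact YY_mem _ _ _ (hbal w')
    rcases hk with ⟨rfl, rfl⟩ | ⟨rfl, hne⟩
    · have := decode_fst (m := m) q₁ _ _ hX hY.symm
      simp only [sh, htt, Prod.fst_add, add_left_inj] at this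
      simpa [target] using pad_inj hL _ _ this
    · have := decode_snd (m := m) q₁ q₂ hne _ _ hX hY.symm
      simp only [sh, htt, Prod.snd_add, add_left_inj] at this
      simpa [target] using pad_inj hL _ _ this
  · simpa [hD] using hS0
  · simpa using hS1
  · simpa [hE] using hA0
  · simpa using hA1

/-! ### Rate estimates -/

lemma choose4 (m : ℕ) : (4 * m).choose m * 27 ^ m ≤ 256 ^ m := by
  have h := add_pow (1 : ℕ) 3 (4 * m)
  have h2 := Finset.single_le_sum (f := fun k => 1 ^ k * 3 ^ (4 * m - k) * (4 * m).choose k)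
    (s := Finset.range (4 * m + 1)) (fun i _ => Nat.zero_le _)
    (Finset.mem_range.mpr (show m < 4 * m + 1 by omega))
  have h3 : (4 * m).choose m * 27 ^ m = 1 ^ m * 3 ^ (4 * m - m) * (4 * m).choose m := by
    rw [show 4 * m - m = 3 * m by omega, pow_mul]; norm_num [mul_comm]
  have h4 : (1 + 3 : ℕ) ^ (4 * m) = 256 ^ m := by rw [pow_mul]; norm_num
  simp only [Nat.cast_id] at h
  rw [h3, ← h4, h]
  exact h2

lemma choose3 (m : ℕ) : (3 * m).choose m * 4 ^ m ≤ 27 ^ m := by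
  have h := add_pow (1 : ℕ) 2 (3 * m)
  have h2 := Finset.single_le_sum (f := fun k => 1 ^ k * 2 ^ (3 * m - k) * (3 * m).choose k)
    (s := Finset.range (3 * m + 1)) (fun i _ => Nat.zero_le _)
    (Finset.mem_range.mpr (show m < 3 * m + 1 by omega))
  have h3 : (3 * m).choose m * 4 ^ m = 1 ^ m * 2 ^ (3 * m - m) * (3 * m).choose m := by
    rw [show 3 * m - m = 2 * m by omega, pow_mul]; norm_num [mul_comm]
  have h4 : (1 + 2 : ℕ) ^ (3 * m) = 27 ^ m := by rw [pow_mul]; norm_num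
  simp only [Nat.cast_id] at h
  rw [h3, ← h4, h]
  exact h2

lemma logb_two_pow (n : ℕ) : Real.logb 2 (2 ^ n) = n := by
  rw [Real.logb_pow, Real.logb_self_eq_one (by norm_num), mul_one]

lemma logb_27 : Real.logb 2 27 = 3 * Real.logb 2 3 := by
  rw [show (27 : ℝ) = 3 ^ 3 by norm_num, Real.logb_pow]; norm_num

lemma logb_choose4 (m : ℕ) :
    Real.logb 2 ((4 * m).choose m) ≤ m * (8 - 3 * Real.logb 2 3) := by
  have hc : (0 : ℝ) < (4 * m).choose m := by
    exact_mod_cast Nat.choose_pos (by omega)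
  have h : ((4 * m).choose m : ℝ) * 27 ^ m ≤ 256 ^ m := by exact_mod_cast choose4 m
  have h2 := Real.logb_le_logb_of_le (b := 2) (by norm_num) (by positivity) h
  rw [Real.logb_mul hc.ne' (by positivity), Real.logb_pow, Real.logb_pow, logb_27,
    show (256 : ℝ) = 2 ^ 8 by norm_num, logb_two_pow] at h2
  push_cast at h2
  linarith

lemma logb_choose3 (m : ℕ) :
    Real.logb 2 ((3 * m).choose m) ≤ m * (3 * Real.logb 2 3 - 2) := by
  have hc : (0 : ℝ) < (3 * m).choose m := by
    exact_mod_cast Nat.choose_pos (by omega)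
  have h : ((3 * m).choose m : ℝ) * 4 ^ m ≤ 27 ^ m := by exact_mod_cast choose3 m
  have h2 := Real.logb_le_logb_of_le (b := 2) (by norm_num) (by positivity) h
  rw [Real.logb_mul hc.ne' (by positivity), Real.logb_pow, Real.logb_pow, logb_27,
    show (4 : ℝ) = 2 ^ 2 by norm_num, logb_two_pow] at h2
  push_cast at h2
  linarith

lemma exists_bits (n : ℕ) (hn : 0 < n) : ∃ σ : ℕ, n ≤ 2 ^ σ ∧ (σ : ℝ) ≤ Real.logb 2 n + 1 := by
  have hn1 : (1 : ℝ) ≤ n := by exact_mod_cast hn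
  have h0 : 0 ≤ Real.logb 2 n := Real.logb_nonneg (by norm_num) hn1
  refine ⟨⌈Real.logb 2 n⌉₊, ?_, (Nat.ceil_lt_add_one h0).le⟩
  have h1 := Nat.le_ceil (Real.logb 2 n)
  have h2 : (n : ℝ) ≤ 2 ^ ⌈Real.logb 2 n⌉₊ := by
    rw [Real.logb_le_iff_le_rpow (by norm_num) (by linarith), Real.rpow_natCast] at h1
    exact h1
  exact_mod_cast h2

lemma eventually_small (ε : ℝ) (hε : 0 < ε) :
    ∃ L₀ : ℕ, ∀ L ≥ L₀, 15 + 2 * Real.logb 2 L ≤ L * ε := by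
  have h1 : (fun x : ℝ => 15 + 2 * Real.logb 2 x) =o[Filter.atTop] (fun x : ℝ => x) := by
    apply Asymptotics.IsLittleO.add
    · exact Asymptotics.isLittleO_const_id_atTop _
    · have := (Real.isLittleO_log_id_atTop).const_mul_left (2 / Real.log 2)
      refine this.congr_left (fun x => ?_)
      unfold Real.logb; ring
  have h2 := (h1.def hε)
  have h3 := tendsto_natCast_atTop_atTop (R := ℝ) |>.eventually h2
  obtain ⟨L₀, h⟩ := Filter.eventually_atTop.mp h3
  refine ⟨L₀, fun L hL => ?_⟩
  have := h L hL
  rw [Real.norm_eq_abs, Real.norm_eq_abs, abs_of_nonneg (Nat.cast_nonneg (α := ℝ) L)] at this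
  linarith [le_abs_self (15 + 2 * Real.logb 2 (L : ℝ))]

/-- The pair `(1/4 + (3/4)·log₂ 3, 3/4)` belongs to the achievable
storage-retrieval rate region `R` of the (2,2) PIR problem. -/
theorem statement10 : ((1/4 + (3/4) * Real.logb 2 3, 3/4) : ℝ × ℝ) ∈ Region := by
  intro ε hε
  obtain ⟨L₁, hL₁⟩ := eventually_small ε hε
  refine ⟨max L₁ 1, fun L hL => ?_⟩
  have hLL := hL₁ L (le_trans (le_max_left _ _) hL)
  have hL1 : 1 ≤ L := le_trans (le_max_right _ _) hL
  obtain ⟨m, hm⟩ : ∃ m, m = (L + 3) / 4 := ⟨_, rfl⟩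
  have hm0 : 0 < m := by omega
  have hLm : L ≤ 4 * m := by omega
  have hmL : 4 * m ≤ L + 3 := by omega
  have hmL' : m ≤ L := by omega
  have hc3 : 0 < (3 * m).choose m := Nat.choose_pos (by omega)
  have hc4 : 0 < (4 * m).choose m := Nat.choose_pos (by omega)
  obtain ⟨σ0, a0, b0⟩ := exists_bits
    ((32 * m ^ 3) * (8 * m) * ((4 * m).choose m * (3 * m).choose m)) (by positivity)
  obtain ⟨σ1, a1, b1⟩ := exists_bits
    ((8 * (3 * m).choose m) * (8 * (3 * m).choose m)) (by positivity)
  obtain ⟨β0, a2, b2⟩ := exists_bits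
    ((32 * m ^ 3) * (8 * m) * (4 * m).choose m) (by positivity)
  obtain ⟨β1, a3, b3⟩ := exists_bits (8 * (3 * m).choose m) (by positivity)
  obtain ⟨C, hC, s0, s1, r0, r1⟩ := scheme L m hm0 hLm σ0 σ1 β0 β1 a0 a1 a2 a3
  refine ⟨C, hC, ?_, ?_⟩
  all_goals
    have l3 := logb_choose3 m
    have l4 := logb_choose4 m
    have p3 : (0 : ℝ) < (3 * m).choose m := by exact_mod_cast hc3
    have p4 : (0 : ℝ) < (4 * m).choose m := by exact_mod_cast hc4
    have pm : (0 : ℝ) < m := by exact_mod_cast hm0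
    have hmr : 4 * (m : ℝ) ≤ L + 3 := by exact_mod_cast hmL
    have hmr' : (m : ℝ) ≤ L := by exact_mod_cast hmL'
    have hlm : Real.logb 2 m ≤ Real.logb 2 L :=
      Real.logb_le_logb_of_le (by norm_num) pm hmr'
    have e8 : Real.logb 2 8 = 3 := by
      rw [show (8 : ℝ) = 2 ^ 3 by norm_num, logb_two_pow]; norm_num
    have e32 : Real.logb 2 32 = 5 := by
      rw [show (32 : ℝ) = 2 ^ 5 by norm_num, logb_two_pow]; norm_num
    have hlog0 : 0 ≤ Real.logb 2 3 := Real.logb_nonneg (by norm_num) (by norm_num)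
    have hlog2 : Real.logb 2 3 ≤ 2 := by
      have := Real.logb_le_logb_of_le (b := 2) (by norm_num) (by norm_num)
        (show (3 : ℝ) ≤ 2 ^ 2 by norm_num)
      rw [logb_two_pow] at this
      exact_mod_cast this
    push_cast at b0 b1 b2 b3
    have eT : Real.logb 2 (32 * (m : ℝ) ^ 3 * (8 * m)) = 8 + 4 * Real.logb 2 m := by
      rw [Real.logb_mul (by positivity) (by positivity),
        Real.logb_mul (by positivity) (by positivity),
        Real.logb_mul (by positivity) (by positivity), Real.logb_pow, e8, e32]
      push_cast; ring
    have eM : Real.logb 2 (8 * ((3 * m).choose m : ℝ)) =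
        3 + Real.logb 2 ((3 * m).choose m) := by
      rw [Real.logb_mul (by positivity) (by positivity), e8]
    rw [Real.logb_mul (by positivity) (by positivity), eT,
      Real.logb_mul (by positivity) (by positivity)] at b0
    rw [Real.logb_mul (by positivity) (by positivity), eM] at b1
    rw [Real.logb_mul (by positivity) (by positivity), eT] at b2
    rw [eM] at b3
  · rw [s0, s1]
    push_cast
    nlinarith
  · rw [r0, r1]
    simp only
    nlinarith

end PIR
end

section
/- For the Section-III random variables, the Shannon entropies satisfy H(X1, X2) = 3/2 and H(Y1 | X1) = (3/4)·(log₂ 3 − 2/3); consequently the storage rate (1/2)·(H(X1,X2) + 2·H(Y1|X1)) equals 1/4 + (3/4)·log₂ 3. -/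
open scoped BigOperators

namespace PIR

/-- Probability that a random variable `X` (on finite sample space `Ω` with
probability mass function `p`) takes the value `x`. -/
noncomputable def prOf {Ω : Type} [Fintype Ω] {γ : Type} [DecidableEq γ]
    (p : Ω → ℝ) (X : Ω → γ) (x : γ) : ℝ :=
  ∑ ω : Ω, if X ω = x then p ω else 0

/-- Shannon entropy (in bits) of the random variable `X`. -/
noncomputable def ent {Ω : Type} [Fintype Ω] {γ : Type} [Fintype γ] [DecidableEq γ]
    (p : Ω → ℝ) (X : Ω → γ) : ℝ :=
  ∑ x : γ, -(prOf p X x * Real.logb 2 (prOf p X x))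

/-- Conditional entropy `H(X|Y) = H(X,Y) - H(Y)` (in bits). -/
noncomputable def condEnt {Ω : Type} [Fintype Ω] {γ δ : Type} [Fintype γ] [DecidableEq γ]
    [Fintype δ] [DecidableEq δ] (p : Ω → ℝ) (X : Ω → γ) (Y : Ω → δ) : ℝ :=
  ent p (fun ω => (X ω, Y ω)) - ent p Y

/-- The sample space of the Section-III random variables: `(V1, V2)` independent
uniform Bernoulli(1/2), i.e. the uniform distribution on `Bool × Bool`. -/
noncomputable def secp : Bool × Bool → ℝ := fun _ => 1/4

/-- `X1 = V1 ∧ V2`. -/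
def secX1 : Bool × Bool → Bool := fun v => v.1 && v.2

/-- `X2 = (¬V1) ∧ (¬V2)`. -/
def secX2 : Bool × Bool → Bool := fun v => (!v.1) && (!v.2)

/-- `Y1 = V1 ∧ (¬V2)`. -/
def secY1 : Bool × Bool → Bool := fun v => v.1 && (!v.2)

/-- `Y2 = (¬V1) ∧ V2`. -/
def secY2 : Bool × Bool → Bool := fun v => (!v.1) && v.2

/-- `H(X1, X2) = 3/2` and `H(Y1 | X1) = (3/4)·(log₂ 3 − 2/3)`; consequently
the storage rate `(1/2)·(H(X1,X2) + 2·H(Y1|X1))` equals `1/4 + (3/4)·log₂ 3`. -/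
theorem statement12 :
    ent secp (fun v => (secX1 v, secX2 v)) = 3/2 ∧
    condEnt secp secY1 secX1 = (3/4) * (Real.logb 2 3 - 2/3) ∧
    (1/2) * (ent secp (fun v => (secX1 v, secX2 v)) + 2 * condEnt secp secY1 secX1)
      = 1/4 + (3/4) * Real.logb 2 3 := by
  have l4 : Real.logb 2 (1/4) = -2 := by
    rw [show (1/4:ℝ) = 2 ^ (-2:ℝ) by
      rw [Real.rpow_neg (by norm_num)]; norm_num]
    exact Real.logb_rpow (by norm_num) (by norm_num)
  have l2 : Real.logb 2 (1/2) = -1 := by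
    rw [show (1/2:ℝ) = 2 ^ (-1:ℝ) by
      rw [Real.rpow_neg (by norm_num)]; norm_num]
    exact Real.logb_rpow (by norm_num) (by norm_num)
  have l34 : Real.logb 2 (3/4) = Real.logb 2 3 - 2 := by
    rw [show (3/4:ℝ) = 3 * (1/4) by norm_num,
      Real.logb_mul (by norm_num) (by norm_num), l4]
    ring
  have e2 : (1/4 + 1/4 : ℝ) = 1/2 := by norm_num
  have e3 : (1/4 + 1/2 : ℝ) = 3/4 := by norm_num
  have hX : ent secp (fun v => (secX1 v, secX2 v)) = 3/2 := by
    simp [ent, prOf, secp, secX1, secX2, Fintype.sum_prod_type, -one_div, e2, l4, l2]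
    try norm_num
  have hYX : ent secp (fun v => (secY1 v, secX1 v)) = 3/2 := by
    simp [ent, prOf, secp, secX1, secY1, Fintype.sum_prod_type, -one_div, e2, l4, l2]
    try norm_num
  have hX1 : ent secp secX1 = 2 - 3/4 * Real.logb 2 3 := by
    simp [ent, prOf, secp, secX1, Fintype.sum_prod_type, -one_div, e2, e3, l4, l34]
    ring
  have hC : condEnt secp secY1 secX1 = (3/4) * (Real.logb 2 3 - 2/3) := by
    rw [condEnt, hYX, hX1]; ring
  refine ⟨hX, hC, ?_⟩
  rw [hX, hC]; ring

end PIR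
end

section
/- (Ingleton inequality for subspaces.) For any four subspaces A, B, C, D of a finite-dimensional vector space over a field, dim A + dim B + dim(C + D) + dim(A + B + C) + dim(A + B + D) ≤ dim(A + C) + dim(A + D) + dim(B + C) + dim(B + D) + dim(A + B), where + denotes the sum (join) of subspaces; equivalently, in entropy form for the linear random variables associated with these subspaces, I(A;B) ≤ I(A;B|C) + I(A;B|D) + I(C;D). -/
/-- Ingleton inequality for subspaces: for any four subspaces
`A, B, C, D` of a finite-dimensional vector space over a field,
`dim A + dim B + dim(C+D) + dim(A+B+C) + dim(A+B+D)
  ≤ dim(A+C) + dim(A+D) + dim(B+C) + dim(B+D) + dim(A+B)`,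
where `⊔` is the sum (join) of subspaces.  (In entropy form, for the linear random
variables associated with these subspaces this reads
`I(A;B) ≤ I(A;B|C) + I(A;B|D) + I(C;D)`.) -/
theorem statement15 {K V : Type*} [Field K] [AddCommGroup V] [Module K V]
    [FiniteDimensional K V] (A B C D : Submodule K V) :
    Module.finrank K A + Module.finrank K B + Module.finrank K ↥(C ⊔ D)
      + Module.finrank K ↥(A ⊔ B ⊔ C) + Module.finrank K ↥(A ⊔ B ⊔ D)
    ≤ Module.finrank K ↥(A ⊔ C) + Module.finrank K ↥(A ⊔ D)
      + Module.finrank K ↥(B ⊔ C) + Module.finrank K ↥(B ⊔ D)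
      + Module.finrank K ↥(A ⊔ B) := by
  have hAB := Submodule.finrank_sup_add_finrank_inf_eq A B
  have hC := Submodule.finrank_sup_add_finrank_inf_eq (A ⊔ C) (B ⊔ C)
  have hD := Submodule.finrank_sup_add_finrank_inf_eq (A ⊔ D) (B ⊔ D)
  have hZ := Submodule.finrank_sup_add_finrank_inf_eq ((A ⊓ B) ⊔ C) ((A ⊓ B) ⊔ D)
  rw [← sup_sup_distrib_right] at hC hD
  have h1 : Module.finrank K ↥((A ⊓ B) ⊔ C) ≤ Module.finrank K ↥((A ⊔ C) ⊓ (B ⊔ C)) :=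
    Submodule.finrank_mono
      (le_inf (sup_le_sup_right inf_le_left C) (sup_le_sup_right inf_le_right C))
  have h2 : Module.finrank K ↥((A ⊓ B) ⊔ D) ≤ Module.finrank K ↥((A ⊔ D) ⊓ (B ⊔ D)) :=
    Submodule.finrank_mono
      (le_inf (sup_le_sup_right inf_le_left D) (sup_le_sup_right inf_le_right D))
  have h3 : Module.finrank K ↥(C ⊔ D) ≤ Module.finrank K ↥((A ⊓ B ⊔ C) ⊔ (A ⊓ B ⊔ D)) :=
    Submodule.finrank_mono (sup_le_sup le_sup_right le_sup_right)
  have h4 : Module.finrank K ↥(A ⊓ B) ≤ Module.finrank K ↥((A ⊓ B ⊔ C) ⊓ (A ⊓ B ⊔ D)) :=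
    Submodule.finrank_mono (le_inf le_sup_left le_sup_left)
  omega
end

section
/- There exists p ∈ (0,1) such that the pair (ᾱ(p), β̄(p)) lies strictly below the straight line segment joining (1/4 + (3/4)·log₂ 3, 3/4) and (1, 1); explicitly, there exists p ∈ (0,1) with ᾱ(p) + 3·log₂(3/2)·β̄(p) < 1 + 3·log₂(3/2), where ᾱ(p) = 9/4 − H(1/4, 3/4) + (1/4)·H((1−p)/2, (1−p)/2, p/2, p/2) + (1/2)·H((2−p)/4, (2−p)/4, p/2) − (3/4)·H((3−2p)/6, (3−2p)/6, p/3, p/3) and β̄(p) = 5/8 + (1/4)·H((2−p)/4, (2−p)/4, p/2) − (1/8)·H((1−p)/2, (1−p)/2, p). Hence the achievable tradeoff strictly improves upon space-sharing between the two extreme points. -/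
open scoped BigOperators

namespace PIR

/-- There exists `p ∈ (0,1)` such that `(ᾱ(p), β̄(p))` lies strictly below
the line segment joining `(1/4 + (3/4)·log₂ 3, 3/4)` and `(1,1)`:
`ᾱ(p) + 3·log₂(3/2)·β̄(p) < 1 + 3·log₂(3/2)`.  Hence the achievable tradeoff strictly
improves upon space-sharing between the two extreme points. -/
theorem statement19 :
    ∃ p ∈ Set.Ioo (0:ℝ) 1,
      alphaCurve p + 3 * Real.logb 2 (3/2) * betaCurve p < 1 + 3 * Real.logb 2 (3/2) := by
  have h4 : Real.logb 2 4 = 2 := by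
    rw [show (4:ℝ) = 2 ^ (2:ℕ) by norm_num, Real.logb_pow]; norm_num
  have h8 : Real.logb 2 8 = 3 := by
    rw [show (8:ℝ) = 2 ^ (3:ℕ) by norm_num, Real.logb_pow]; norm_num
  have h2 : Real.logb 2 2 = 1 := by norm_num
  have h1 : Real.logb 2 1 = 0 := by norm_num
  have h6 : Real.logb 2 6 = 1 + Real.logb 2 3 := by
    rw [show (6:ℝ) = 2 * 3 by norm_num, Real.logb_mul (by norm_num) (by norm_num), h2]
  have d (a b : ℝ) (ha : a ≠ 0) (hb : b ≠ 0) :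
      Real.logb 2 (a / b) = Real.logb 2 a - Real.logb 2 b := Real.logb_div ha hb
  have e14 : Real.logb 2 (1/4) = -2 := by
    rw [d _ _ (by norm_num) (by norm_num), h1, h4]; norm_num
  have e12 : Real.logb 2 (1/2) = -1 := by
    rw [d _ _ (by norm_num) (by norm_num), h1, h2]; norm_num
  have e34 : Real.logb 2 (3/4) = Real.logb 2 3 - 2 := by
    rw [d _ _ (by norm_num) (by norm_num), h4]
  have e38 : Real.logb 2 (3/8) = Real.logb 2 3 - 3 := by
    rw [d _ _ (by norm_num) (by norm_num), h8]
  have e32 : Real.logb 2 (3/2) = Real.logb 2 3 - 1 := by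
    rw [d _ _ (by norm_num) (by norm_num), h2]
  have e13 : Real.logb 2 (1/3) = - Real.logb 2 3 := by
    rw [d _ _ (by norm_num) (by norm_num), h1]; ring
  have e16 : Real.logb 2 (1/6) = - 1 - Real.logb 2 3 := by
    rw [d _ _ (by norm_num) (by norm_num), h1, h6]; ring
  have hL : 11 / 7 < Real.logb 2 3 := by
    have h : Real.logb 2 ((2:ℝ) ^ (11:ℕ)) < Real.logb 2 ((3:ℝ) ^ (7:ℕ)) :=
      Real.logb_lt_logb (by norm_num) (by norm_num) (by norm_num)
    rw [Real.logb_pow, Real.logb_pow, h2] at h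
    norm_num at h
    linarith
  refine ⟨1/2, ⟨by norm_num, by norm_num⟩, ?_⟩
  unfold alphaCurve betaCurve hent
  simp only [List.map_cons, List.map_nil, List.sum_cons, List.sum_nil]
  rw [show ((1:ℝ)-1/2)/2 = 1/4 by norm_num, show ((1:ℝ)/2)/2 = 1/4 by norm_num,
    show ((2:ℝ)-1/2)/4 = 3/8 by norm_num, show ((3:ℝ)-2*(1/2))/6 = 1/3 by norm_num,
    show ((1:ℝ)/2)/3 = 1/6 by norm_num, e14, e12, e34, e38, e32, e13, e16]
  nlinarith [mul_pos (sub_pos.2 hL) (sub_pos.2 hL)]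

end PIR
end
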